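/- arXiv:0902.4589 — 2 statements merged into one kernel-verified Lean document; each statement's English description precedes it below -/
import Mathlib

section
/- Let m ≥ 5 be an integer and let K ⊆ ℝ³ be the polyhedral cone generated by the vectors y_j = (cos(2jπ/m), sin(2jπ/m), 1)^T, j = 1, …, m. Then there do not exist a K-primitive matrix A and an enumeration x_1, …, x_m of pairwise non-proportional extreme vectors of K such that A x_i is a positive scalar multiple of x_{i+1} for i = 1, …, m−1 and A x_m = α x_1 + β x_2 for some positive reals α, β. -/
open Matrix Set Real

noncomputable section

/-- A proper cone in `ℝ^n`: a closed convex cone that is pointed and full. -/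
def IsProperCone {n : ℕ} (K : Set (Fin n → ℝ)) : Prop :=
  IsClosed K ∧ (∀ x ∈ K, ∀ y ∈ K, x + y ∈ K) ∧
    (∀ (c : ℝ), 0 ≤ c → ∀ x ∈ K, c • x ∈ K) ∧
    K ∩ (-K) = {0} ∧ (interior K).Nonempty

/-- The positive hull (cone generated by) finitely many vectors. -/
def ConeGen {n m : ℕ} (y : Fin m → Fin n → ℝ) : Set (Fin n → ℝ) :=
  {x | ∃ c : Fin m → ℝ, (∀ j, 0 ≤ c j) ∧ x = ∑ j, c j • y j}

/-- A polyhedral cone: a proper cone that is the positive hull of finitely many vectors. -/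
def IsPolyhedralCone {n : ℕ} (K : Set (Fin n → ℝ)) : Prop :=
  IsProperCone K ∧ ∃ (m : ℕ) (y : Fin m → Fin n → ℝ), K = ConeGen y

/-- `A` is `K`-nonnegative: `A K ⊆ K`. -/
def KNonneg {n : ℕ} (K : Set (Fin n → ℝ)) (A : Matrix (Fin n) (Fin n) ℝ) : Prop :=
  ∀ x ∈ K, A.mulVec x ∈ K

/-- `A` is `K`-positive: `A` maps `K \ {0}` into the interior of `K`. -/
def KPositive {n : ℕ} (K : Set (Fin n → ℝ)) (A : Matrix (Fin n) (Fin n) ℝ) : Prop :=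
  ∀ x ∈ K, x ≠ 0 → A.mulVec x ∈ interior K

/-- `A` is `K`-primitive: `A` is `K`-nonnegative and some power of `A` is `K`-positive. -/
def KPrimitive {n : ℕ} (K : Set (Fin n → ℝ)) (A : Matrix (Fin n) (Fin n) ℝ) : Prop :=
  KNonneg K A ∧ ∃ k : ℕ, 0 < k ∧ KPositive K (A ^ k)

/-- The exponent `γ(A)` of a `K`-primitive matrix: the least `k ≥ 1` with `A^k` `K`-positive. -/
def expnt {n : ℕ} (K : Set (Fin n → ℝ)) (A : Matrix (Fin n) (Fin n) ℝ) : ℕ :=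
  sInf {k : ℕ | 0 < k ∧ KPositive K (A ^ k)}

/-- `x` is an extreme vector of `K`. -/
def IsExtremeVec {n : ℕ} (K : Set (Fin n → ℝ)) (x : Fin n → ℝ) : Prop :=
  x ∈ K ∧ x ≠ 0 ∧ ∀ y ∈ K, ∀ z ∈ K, x = y + z →
    (∃ a : ℝ, 0 ≤ a ∧ y = a • x) ∧ (∃ b : ℝ, 0 ≤ b ∧ z = b • x)

/-- The set of extreme rays of `K`. -/
def ExtremeRays {n : ℕ} (K : Set (Fin n → ℝ)) : Set (Set (Fin n → ℝ)) :=
  {R | ∃ x, IsExtremeVec K x ∧ R = {y | ∃ c : ℝ, 0 ≤ c ∧ y = c • x}}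

/-- `K ∈ P(m,n)`: an `n`-dimensional polyhedral cone in `ℝ^n` with exactly `m` extreme rays.
(A proper cone in `ℝ^n` has nonempty interior, hence is automatically `n`-dimensional.) -/
def MemP {n : ℕ} (m : ℕ) (K : Set (Fin n → ℝ)) : Prop :=
  IsPolyhedralCone K ∧ (ExtremeRays K).ncard = m

/-- A face of a cone `K`. -/
def IsFace {n : ℕ} (K F : Set (Fin n → ℝ)) : Prop :=
  0 ∈ F ∧ F ⊆ K ∧ (∀ x ∈ F, ∀ y ∈ F, x + y ∈ F) ∧
    (∀ (c : ℝ), 0 ≤ c → ∀ x ∈ F, c • x ∈ F) ∧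
    ∀ x ∈ F, ∀ y ∈ K, x - y ∈ K → y ∈ F

/-- `A` is `K`-irreducible: `A` is `K`-nonnegative and leaves invariant no nontrivial face. -/
def KIrreducible {n : ℕ} (K : Set (Fin n → ℝ)) (A : Matrix (Fin n) (Fin n) ℝ) : Prop :=
  KNonneg K A ∧ ∀ F : Set (Fin n → ℝ), IsFace K F → (∀ x ∈ F, A.mulVec x ∈ F) →
    F = ({0} : Set (Fin n → ℝ)) ∨ F = K

/-- The polyhedral cone in `ℝ³` generated by `y_j = (cos(2jπ/m), sin(2jπ/m), 1)ᵀ`, `j = 1,…,m`. -/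
def Kcirc (m : ℕ) : Set (Fin 3 → ℝ) :=
  ConeGen (fun j : Fin m =>
    ![Real.cos (2 * ((j : ℕ) + 1) * π / m), Real.sin (2 * ((j : ℕ) + 1) * π / m), 1])

/-- explicit 3x3 determinant -/
def dt (a b c : Fin 3 → ℝ) : ℝ :=
  a 0 * (b 1 * c 2 - b 2 * c 1) - a 1 * (b 0 * c 2 - b 2 * c 0) + a 2 * (b 0 * c 1 - b 1 * c 0)

lemma dt_mulVec (A : Matrix (Fin 3) (Fin 3) ℝ) (a b c : Fin 3 → ℝ) :
    dt (A *ᵥ a) (A *ᵥ b) (A *ᵥ c) = A.det * dt a b c := by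
  simp only [dt, Matrix.det_fin_three, Matrix.mulVec, dotProduct, Fin.sum_univ_three]
  ring

lemma dt_cramer (a b c d : Fin 3 → ℝ) :
    dt a b c • d = dt d b c • a + dt a d c • b + dt a b d • c := by
  ext i
  fin_cases i <;> simp [dt] <;> ring

lemma dt_cyc (a b c : Fin 3 → ℝ) : dt a b c = dt b c a := by
  simp only [dt]; ring

lemma dt_swap (a b c : Fin 3 → ℝ) : dt a b c = - dt a c b := by
  simp only [dt]; ring

lemma dt_smul3 (r s t : ℝ) (a b c : Fin 3 → ℝ) :
    dt (r • a) (s • b) (t • c) = r * s * t * dt a b c := by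
  simp only [dt, Pi.smul_apply, smul_eq_mul]; ring

lemma dt_comb3 (r s t : ℝ) (p q a b c : Fin 3 → ℝ) :
    dt p q (r • a + s • b + t • c) = r * dt p q a + s * dt p q b + t * dt p q c := by
  simp only [dt, Pi.smul_apply, Pi.add_apply, smul_eq_mul]; ring

lemma dt_comb2 (r s : ℝ) (p q a b : Fin 3 → ℝ) :
    dt p q (r • a + s • b) = r * dt p q a + s * dt p q b := by
  simp only [dt, Pi.smul_apply, Pi.add_apply, smul_eq_mul]; ring

lemma dt_smul (r : ℝ) (p q a : Fin 3 → ℝ) :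
    dt p q (r • a) = r * dt p q a := by
  simp only [dt, Pi.smul_apply, smul_eq_mul]; ring

lemma dt_self1 (a b : Fin 3 → ℝ) : dt a b a = 0 := by
  simp only [dt]; ring

lemma dt_self2 (a b : Fin 3 → ℝ) : dt a b b = 0 := by
  simp only [dt]; ring

/-- vertices indexed by integers -/
def YI (m : ℕ) (n : ℤ) : Fin 3 → ℝ :=
  ![Real.cos (2 * n * π / m), Real.sin (2 * n * π / m), 1]

/-- vertices indexed by residues -/
def YZ (m : ℕ) (a : ZMod m) : Fin 3 → ℝ := YI m (a.val : ℤ)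

lemma YI_congr (m : ℕ) [NeZero m] (a b : ℤ) (h : (a : ZMod m) = b) : YI m a = YI m b := by
  rw [ZMod.intCast_eq_intCast_iff_dvd_sub] at h
  obtain ⟨k, hk⟩ := h
  have hb : b = a + m * k := by omega
  have hm : (m : ℝ) ≠ 0 := Nat.cast_ne_zero.mpr (NeZero.ne m)
  have : 2 * (b : ℝ) * π / m = 2 * a * π / m + k * (2 * π) := by
    rw [hb]; push_cast; field_simp
  simp only [YI, this, Real.cos_add_int_mul_two_pi, Real.sin_add_int_mul_two_pi]

lemma YZ_cast (m : ℕ) [NeZero m] (n : ℤ) : YZ m (n : ZMod m) = YI m n := by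
  apply YI_congr
  simp

lemma exists_int (m : ℕ) [NeZero m] (a : ZMod m) : ∃ n : ℤ, (n : ZMod m) = a :=
  ⟨a.val, by simp⟩

lemma dt_circ (x y z : ℝ) :
    dt ![Real.cos (2*x), Real.sin (2*x), 1] ![Real.cos (2*y), Real.sin (2*y), 1]
      ![Real.cos (2*z), Real.sin (2*z), 1]
      = 4 * Real.sin (y - x) * Real.sin (z - y) * Real.sin (z - x) := by
  simp only [dt, Matrix.cons_val_zero, Matrix.cons_val_one, Matrix.cons_val]
  simp only [Real.cos_two_mul, Real.sin_two_mul, Real.sin_sub]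
  have hx := Real.sin_sq_add_cos_sq x
  have hy := Real.sin_sq_add_cos_sq y
  have hz := Real.sin_sq_add_cos_sq z
  generalize Real.sin x = a at *
  generalize Real.cos x = b at *
  generalize Real.sin y = c at *
  generalize Real.cos y = d at *
  generalize Real.sin z = e at *
  generalize Real.cos z = f at *
  grind

lemma dt_YI (m : ℕ) (a b c : ℤ) :
    dt (YI m a) (YI m b) (YI m c) = 4 * Real.sin (((b - a : ℤ) : ℝ) * π / m)
      * Real.sin (((c - b : ℤ) : ℝ) * π / m) * Real.sin (((c - a : ℤ) : ℝ) * π / m) := by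
  have := dt_circ (a * π / m) (b * π / m) (c * π / m)
  have e : ∀ n : ℤ, YI m n = ![Real.cos (2*(n * π / m)), Real.sin (2*(n * π / m)), 1] := by
    intro n
    have : 2 * (n:ℝ) * π / m = 2 * (n * π / m) := by ring
    simp only [YI, this]
  rw [e, e, e, this]
  have h : ∀ p q : ℤ, ((p - q : ℤ) : ℝ) * π / m = p * π / m - q * π / m := by
    intro p q; push_cast; ring
  rw [h, h, h]

lemma sin_ne (m : ℕ) [NeZero m] (a b : ℤ) (h : (a : ZMod m) ≠ b) :
    Real.sin (((b - a : ℤ) : ℝ) * π / m) ≠ 0 := by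
  intro h0
  rw [Real.sin_eq_zero_iff] at h0
  obtain ⟨n, hn⟩ := h0
  apply h
  rw [ZMod.intCast_eq_intCast_iff_dvd_sub]
  refine ⟨n, ?_⟩
  have hm : (m : ℝ) ≠ 0 := Nat.cast_ne_zero.mpr (NeZero.ne m)
  have hp := Real.pi_ne_zero
  have : ((b - a : ℤ) : ℝ) = m * n := by
    field_simp at hn
    linarith
  exact_mod_cast this

lemma dt_ne (m : ℕ) [NeZero m] (a b c : ZMod m) (h1 : a ≠ b) (h2 : b ≠ c) (h3 : a ≠ c) :
    dt (YZ m a) (YZ m b) (YZ m c) ≠ 0 := by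
  obtain ⟨a, rfl⟩ := exists_int m a
  obtain ⟨b, rfl⟩ := exists_int m b
  obtain ⟨c, rfl⟩ := exists_int m c
  rw [YZ_cast, YZ_cast, YZ_cast, dt_YI]
  have := sin_ne m a b h1
  have := sin_ne m b c h2
  have := sin_ne m a c h3
  positivity

lemma dt_pos (m : ℕ) [NeZero m] (hm : 5 ≤ m) (a c : ZMod m) (h1 : c ≠ a) (h2 : c ≠ a + 1) :
    0 < dt (YZ m a) (YZ m (a+1)) (YZ m c) := by
  obtain ⟨n, hn⟩ : ∃ n : ℕ, n = (c - a).val := ⟨_, rfl⟩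
  have hlt : n < m := hn ▸ ZMod.val_lt _
  have hc : c = a + (n : ZMod m) := by rw [hn]; simp
  have hn0 : n ≠ 0 := by rintro rfl; apply h1; rw [hc]; simp
  have hn1 : n ≠ 1 := by
    intro h; apply h2; rw [hc, h]; simp
  clear hn
  obtain ⟨a, rfl⟩ := exists_int m a
  have e1 : (a : ZMod m) + 1 = ((a + 1 : ℤ) : ZMod m) := by push_cast; rfl
  have e2 : c = ((a + n : ℤ) : ZMod m) := by rw [hc]; push_cast; rfl
  rw [e1, e2, YZ_cast, YZ_cast, YZ_cast, dt_YI]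
  have key : ∀ k : ℤ, 0 < k → k < m → 0 < Real.sin ((k : ℝ) * π / m) := by
    intro k h0 h1
    have hm : (0 : ℝ) < m := by exact_mod_cast (by omega : 0 < m)
    have h0' : (0 : ℝ) < k := by exact_mod_cast h0
    have h1' : (k : ℝ) < m := by exact_mod_cast h1
    have hp := Real.pi_pos
    apply Real.sin_pos_of_pos_of_lt_pi
    · positivity
    · rw [div_lt_iff₀ hm]; nlinarith
  have k1 := key (a + 1 - a) (by omega) (by omega)
  have k2 := key (a + n - (a + 1)) (by omega) (by omega)
  have k3 := key (a + n - a) (by omega) (by omega)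
  positivity

lemma dt_nonneg (m : ℕ) [NeZero m] (hm : 5 ≤ m) (a c : ZMod m) :
    0 ≤ dt (YZ m a) (YZ m (a+1)) (YZ m c) := by
  by_cases h1 : c = a
  · rw [h1, dt_self1]
  by_cases h2 : c = a + 1
  · rw [h2, dt_self2]
  exact (dt_pos m hm a c h1 h2).le

lemma natCast_ne (m : ℕ) (k : ℕ) (h0 : 0 < k) (h : k < m) : (k : ZMod m) ≠ 0 := by
  rw [Ne, ZMod.natCast_eq_zero_iff]
  exact Nat.not_dvd_of_pos_of_lt h0 h

lemma not_comb (m : ℕ) [NeZero m] (hm : 5 ≤ m) (v s r k : ZMod m) (hs : s ≠ v)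
    (d l μ ν : ℝ) (hl : 0 < l) (hμ : 0 < μ) (hν : 0 < ν)
    (h : d • YZ m v = l • YZ m s + μ • YZ m r + ν • YZ m k) : False := by
  by_cases hs1 : s = v + 1
  · have h1 := congrArg (dt (YZ m (v-1)) (YZ m v)) h
    rw [dt_comb3, dt_smul, dt_self2] at h1
    have e : v = (v - 1) + 1 := by ring
    have a1 : 0 < dt (YZ m (v-1)) (YZ m v) (YZ m s) := by
      have := dt_pos m hm (v - 1) s (by
        intro h
        apply natCast_ne m 2 (by norm_num) (by omega)
        have : v + 1 = v - 1 := hs1.symm.trans h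
        push_cast
        linear_combination this) (by rwa [← e])
      rwa [← e] at this
    have a2 := dt_nonneg m hm (v-1) r
    have a3 := dt_nonneg m hm (v-1) k
    rw [← e] at a2 a3
    nlinarith [mul_pos hl a1, mul_nonneg hμ.le a2, mul_nonneg hν.le a3]
  · have h1 := congrArg (dt (YZ m v) (YZ m (v+1))) h
    rw [dt_comb3, dt_smul, dt_self1] at h1
    have a1 := dt_pos m hm v s hs hs1
    have a2 := dt_nonneg m hm v r
    have a3 := dt_nonneg m hm v k
    nlinarith [mul_pos hl a1, mul_nonneg hμ.le a2, mul_nonneg hν.le a3]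

lemma step (m : ℕ) [NeZero m] (hm : 5 ≤ m) (A : Matrix (Fin 3) (Fin 3) ℝ)
    (hA : A.det ≠ 0) (g : ZMod m → ZMod m) (hg : Function.Bijective g) (v : ZMod m)
    (huv : g v ≠ v)
    (c : ZMod m → ℝ) (hc : ∀ s, 0 < c s) (hAc : ∀ s, s ≠ v → A *ᵥ YZ m s = c s • YZ m (g s))
    (α β : ℝ) (hα : 0 < α)
    (hAv : A *ᵥ YZ m v = α • YZ m (g v) + β • YZ m (g (g v)))
    (s r : ZMod m) (hs : s ≠ v) (hr : r ≠ v) (hsr : s ≠ r)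
    (hpos : ∀ k, k ≠ s → k ≠ r → 0 < A.det * dt (YZ m s) (YZ m r) (YZ m k)) :
    g r = g s + 1 := by
  by_contra hne
  have hab : g s ≠ g r := fun h => hsr (hg.1 h)
  have one : (1 : ZMod m) ≠ 0 := by
    have := natCast_ne m 1 (by norm_num) (by omega)
    simpa using this
  have P : ∀ k, k ≠ s → k ≠ r → k ≠ v → 0 < dt (YZ m (g s)) (YZ m (g r)) (YZ m (g k)) := by
    intro k h1 h2 h3
    have := hpos k h1 h2
    rw [← dt_mulVec, hAc s hs, hAc r hr, hAc k h3, dt_smul3] at this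
    have hh : 0 < c s * c r * c k := mul_pos (mul_pos (hc _) (hc _)) (hc _)
    exact (mul_pos_iff_of_pos_left hh).1 this
  have Pw : 0 < dt (YZ m (g s)) (YZ m (g r)) (A *ᵥ YZ m v) := by
    have := hpos v hs.symm hr.symm
    rw [← dt_mulVec, hAc s hs, hAc r hr, ← one_smul ℝ (A *ᵥ YZ m v), dt_smul3] at this
    have hh : 0 < c s * c r * 1 := by have := hc s; have := hc r; positivity
    exact (mul_pos_iff_of_pos_left hh).1 this
  have Pk : ∀ q, dt (YZ m (g s)) (YZ m (g r)) (YZ m q) < 0 → q = g v := by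
    intro q hq
    obtain ⟨k, rfl⟩ := hg.2 q
    by_contra hk
    have h3 : k ≠ v := fun h => hk (by rw [h])
    by_cases h1 : k = s
    · rw [h1, dt_self1] at hq; exact lt_irrefl _ hq
    by_cases h2 : k = r
    · rw [h2, dt_self2] at hq; exact lt_irrefl _ hq
    exact lt_asymm hq (P k h1 h2 h3)
  have N1 : dt (YZ m (g s)) (YZ m (g r)) (YZ m (g s + 1)) < 0 := by
    rw [dt_swap]
    have := dt_pos m hm (g s) (g r) hab.symm hne
    linarith
  have u1 := Pk _ N1
  have e : g r = (g r - 1) + 1 := by ring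
  have N2 : dt (YZ m (g s)) (YZ m (g r)) (YZ m (g r - 1)) < 0 := by
    rw [dt_cyc, dt_swap, dt_cyc, dt_cyc, dt_cyc]
    have := dt_pos m hm (g r - 1) (g s) (by
      intro h; apply hne; rw [h]; ring) (by rwa [← e])
    rw [← e] at this
    rw [dt_cyc] at this
    rw [dt_cyc] at this
    rw [dt_cyc]
    linarith [dt_cyc (YZ m (g s)) (YZ m (g r - 1)) (YZ m (g r))]
  have u2 := Pk _ N2
  rw [u1] at N1
  have Pw' := Pw
  rw [hAv, dt_comb2] at Pw'
  have hau := mul_neg_of_pos_of_neg hα N1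
  by_cases ks : g v = s
  · rw [ks, dt_self1] at Pw'
    rw [ks] at hau
    linarith
  by_cases kr : g v = r
  · rw [kr, dt_self2] at Pw'
    rw [kr] at hau
    linarith
  have PD := P (g v) ks kr huv
  have hu1 : g (g v) ≠ g s := fun h => ks (hg.1 h)
  have hu2 : g (g v) ≠ g r := fun h => kr (hg.1 h)
  have hu3 : g (g v) ≠ g v := fun h => huv (hg.1 h)
  have c1 : 0 < dt (YZ m (g v)) (YZ m (g r)) (YZ m (g (g v))) := by
    have := dt_pos m hm (g r - 1) (g (g v)) (by rwa [u2]) (by rwa [← e])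
    rwa [← e, u2] at this
  have c2 : 0 < dt (YZ m (g s)) (YZ m (g v)) (YZ m (g (g v))) := by
    have := dt_pos m hm (g s) (g (g v)) hu1 (by rwa [u1])
    rwa [u1] at this
  have cr := dt_cramer (YZ m (g s)) (YZ m (g r)) (YZ m (g (g v))) (YZ m (g v))
  have cs0 := hc s
  have cr0 := hc r
  have cv0 := hc (g v)
  set Δ := dt (YZ m (g s)) (YZ m (g r)) (YZ m (g (g v))) with hΔ
  set d1 := dt (YZ m (g v)) (YZ m (g r)) (YZ m (g (g v)))
  set d2 := dt (YZ m (g s)) (YZ m (g v)) (YZ m (g (g v)))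
  set d3 := dt (YZ m (g s)) (YZ m (g r)) (YZ m (g v))
  refine not_comb m hm v s r (g v) hs Δ (α * d1 / c s) (α * d2 / c r)
    ((α * d3 + β * Δ) / c (g v)) (by positivity) (by positivity) (by positivity) ?_
  rw [← sub_eq_zero]
  apply Matrix.eq_zero_of_mulVec_eq_zero hA
  rw [Matrix.mulVec_sub, Matrix.mulVec_add, Matrix.mulVec_add]
  simp only [Matrix.mulVec_smul]
  rw [hAv, hAc s hs, hAc r hr, hAc (g v) huv]
  simp only [smul_smul]
  rw [div_mul_cancel₀ _ cs0.ne', div_mul_cancel₀ _ cr0.ne', div_mul_cancel₀ _ cv0.ne', sub_eq_zero]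
  ext i
  have := congrFun cr i
  simp only [Pi.smul_apply, Pi.add_apply, smul_eq_mul] at this ⊢
  linear_combination α * this

lemma YI_rec (m : ℕ) (n : ℤ) : YI m (n + 3) =
    YI m n + (1 + 2 * Real.cos (2 * π / m)) • (YI m (n + 2) - YI m (n+1)) := by
  have e0 : 2 * ((n : ℤ) : ℝ) * π / m = 2 * n * π / m := rfl
  have e1 : 2 * ((n + 1 : ℤ) : ℝ) * π / m = 2 * n * π / m + 2 * π / m := by push_cast; ring
  have e2 : 2 * ((n + 2 : ℤ) : ℝ) * π / m = 2 * n * π / m + 2 * (2 * π / m) := by push_cast; ring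
  have e3 : 2 * ((n + 3 : ℤ) : ℝ) * π / m = 2 * n * π / m + 3 * (2 * π / m) := by push_cast; ring
  simp only [YI, e1, e2, e3]
  generalize 2 * (n:ℝ) * π / m = x
  generalize 2 * π / (m:ℝ) = t
  have ht := Real.sin_sq_add_cos_sq t
  ext i
  fin_cases i
  · simp [Real.cos_add, Real.cos_two_mul, Real.sin_two_mul, Real.cos_three_mul, Real.sin_three_mul]
    grind
  · simp [Real.sin_add, Real.cos_two_mul, Real.sin_two_mul, Real.cos_three_mul, Real.sin_three_mul]
    grind
  · simp

lemma YZ_rec (m : ℕ) [NeZero m] (a : ZMod m) : YZ m (a + 3) =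
    YZ m a + (1 + 2 * Real.cos (2 * π / m)) • (YZ m (a + 2) - YZ m (a+1)) := by
  obtain ⟨n, rfl⟩ := exists_int m a
  have := YI_rec m n
  rw [← YZ_cast, ← YZ_cast, ← YZ_cast, ← YZ_cast] at this
  push_cast at this
  exact this

lemma core (m : ℕ) [NeZero m] (hm : 5 ≤ m) (A : Matrix (Fin 3) (Fin 3) ℝ)
    (hA : A.det ≠ 0) (g : ZMod m → ZMod m) (hg : Function.Bijective g) (v : ZMod m)
    (huv : g v ≠ v) (huv2 : g (g v) ≠ v)
    (c : ZMod m → ℝ) (hc : ∀ s, 0 < c s) (hAc : ∀ s, s ≠ v → A *ᵥ YZ m s = c s • YZ m (g s))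
    (α β : ℝ) (hα : 0 < α) (hβ : 0 < β)
    (hAv : A *ᵥ YZ m v = α • YZ m (g v) + β • YZ m (g (g v))) : False := by
  have one : (1 : ZMod m) ≠ 0 := by
    simpa using natCast_ne m 1 (by norm_num) (by omega)
  have ind : ∀ (P : ZMod m → Prop), P (v + 1) →
      (∀ s, s ≠ v → s + 1 ≠ v → P s → P (s + 1)) → ∀ s, s ≠ v → P s := by
    intro P h1 h2
    have : ∀ k : ℕ, k + 1 < m → P (v + ((k + 1 : ℕ) : ZMod m)) := by
      intro k
      induction k with
      | zero => intro _; simpa using h1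
      | succ k ih =>
        intro hk
        have e : v + ((k + 1 + 1 : ℕ) : ZMod m) = (v + ((k + 1 : ℕ) : ZMod m)) + 1 := by
          push_cast; ring
        rw [e]
        apply h2 _ _ _ (ih (by omega))
        · intro h
          exact natCast_ne m (k+1) (by omega) (by omega) (by simpa using h)
        · rw [← e]
          intro h
          rw [add_eq_left] at h
          exact natCast_ne m (k+1+1) (by omega) (by omega) h
    intro s hs
    have hv : (s - v).val ≠ 0 := by
      rw [Ne, ZMod.val_eq_zero, sub_eq_zero]; exact hs
    have := this ((s - v).val - 1) (by have := ZMod.val_lt (s - v); omega)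
    rw [Nat.sub_add_cancel (by omega)] at this
    simpa using this
  rcases lt_or_gt_of_ne hA with hneg | hpos
  · have st : ∀ s, s ≠ v → s + 1 ≠ v → g s = g (s + 1) + 1 := by
      intro s h1 h2
      apply step m hm A hA g hg v huv c hc hAc α β hα hAv (s+1) s h2 h1 (by simpa using one)
      intro k k1 k2
      have := dt_pos m hm s k k2 k1
      have e : dt (YZ m (s+1)) (YZ m s) (YZ m k) = - dt (YZ m s) (YZ m (s+1)) (YZ m k) := by
        simp only [dt]; ring
      rw [e]
      nlinarith
    have cst : ∀ s, s ≠ v → g s + s = g (v + 1) + (v + 1) := by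
      apply ind
      · rfl
      · intro s h1 h2 h
        rw [← h, st s h1 h2]; ring
    have gv : g v = g (v + 1) + 1 := by
      obtain ⟨j, hj⟩ := hg.2 (g (v+1) + 1)
      by_cases hjv : j = v
      · rw [← hj, hjv]
      · exfalso
        have := cst j hjv
        rw [hj] at this
        apply hjv
        linear_combination this
    apply huv2
    have := cst (g v) huv
    linear_combination this - gv
  · have st : ∀ s, s ≠ v → s + 1 ≠ v → g (s + 1) = g s + 1 := by
      intro s h1 h2
      apply step m hm A hA g hg v huv c hc hAc α β hα hAv s (s+1) h1 h2 (by simpa using one)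
      intro k k1 k2
      exact mul_pos hpos (dt_pos m hm s k k1 k2)
    obtain ⟨t, ht⟩ : ∃ t, t = g (v + 1) - (v + 1) := ⟨_, rfl⟩
    have cst : ∀ s, s ≠ v → g s = s + t := by
      apply ind
      · rw [ht]; ring
      · intro s h1 h2 h
        rw [st s h1 h2, h]; ring
    have gv : g v = v + t := by
      obtain ⟨j, hj⟩ := hg.2 (v + t)
      by_cases hjv : j = v
      · rw [← hj, hjv]
      · exfalso
        have := cst j hjv
        rw [hj] at this
        apply hjv
        linear_combination -this
    have hk : 0 < 1 + 2 * Real.cos (2 * π / m) := by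
      have : 0 < Real.cos (2 * π / m) := by
        have hp := Real.pi_pos
        have hm' : (5 : ℝ) ≤ m := by exact_mod_cast hm
        apply Real.cos_pos_of_mem_Ioo
        constructor
        · have : 0 < 2 * π / m := by positivity
          linarith
        · rw [div_lt_iff₀ (by linarith)]
          nlinarith
      linarith
    have nk : ∀ k : ℕ, 0 < k → k < m → v + (k : ZMod m) ≠ v := by
      intro k h1 h2 h
      exact natCast_ne m k h1 h2 (by simpa using h)
    have n1 : v + 1 ≠ v := by simpa using nk 1 (by norm_num) (by omega)
    have n2 : v + 2 ≠ v := by simpa using nk 2 (by norm_num) (by omega)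
    have n3 : v + 3 ≠ v := by simpa using nk 3 (by norm_num) (by omega)
    have n4 : v + 4 ≠ v := by simpa using nk 4 (by norm_num) (by omega)
    have a1 := hAc _ n1
    have a2 := hAc _ n2
    have a3 := hAc _ n3
    have a4 := hAc _ n4
    rw [cst _ n1] at a1
    rw [cst _ n2] at a2
    rw [cst _ n3] at a3
    rw [cst _ n4] at a4
    have r1 := YZ_rec m v
    have r2 := YZ_rec m (v+1)
    have r1' := YZ_rec m (v+t)
    have r2' := YZ_rec m (v+1+t)
    rw [show v + 1 + 3 = v + 4 by ring, show v + 1 + 2 = v + 3 by ring,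
      show v + 1 + 1 = v + 2 by ring] at r2
    rw [show v + t + 3 = v + 3 + t by ring, show v + t + 2 = v + 2 + t by ring,
      show v + t + 1 = v + 1 + t by ring] at r1'
    rw [show v + 1 + t + 3 = v + 4 + t by ring, show v + 1 + t + 2 = v + 3 + t by ring,
      show v + 1 + t + 1 = v + 2 + t by ring] at r2'
    generalize 1 + 2 * Real.cos (2 * π / m) = k at *
    have D : dt (YZ m (v+1+t)) (YZ m (v+2+t)) (YZ m (v+3+t)) ≠ 0 := by
      apply dt_ne
      · intro h; apply n1; linear_combination -h
      · intro h; apply n1; linear_combination -h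
      · intro h; apply n2; linear_combination -h
    have E4 := congrArg (fun z => A *ᵥ z) r2
    simp only [Matrix.mulVec_add, Matrix.mulVec_smul, Matrix.mulVec_sub, a1, a2, a3, a4] at E4
    rw [r2'] at E4
    generalize c (v+1) = c1 at *
    generalize c (v+2) = c2 at *
    generalize c (v+3) = c3 at *
    generalize c (v+4) = c4 at *
    have E1 := congrArg (fun z => A *ᵥ z) r1
    simp only [Matrix.mulVec_add, Matrix.mulVec_smul, Matrix.mulVec_sub, a1, a2, a3] at E1
    rw [hAv, r1', gv] at E1
    have L : (c4 - c1) • YZ m (v+1+t) + (k * (c2 - c4)) • YZ m (v+2+t)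
        + (k * (c4 - c3)) • YZ m (v+3+t) = 0 := by
      ext i
      have := congrFun E4 i
      simp only [Pi.smul_apply, Pi.add_apply, Pi.sub_apply, Pi.zero_apply, smul_eq_mul] at this ⊢
      linear_combination this
    have z0 : ∀ p q, dt p q 0 = 0 := by intro p q; simp [dt]
    have q1 := congrArg (dt (YZ m (v+2+t)) (YZ m (v+3+t))) L
    have q2 := congrArg (dt (YZ m (v+3+t)) (YZ m (v+1+t))) L
    have q3 := congrArg (dt (YZ m (v+1+t)) (YZ m (v+2+t))) L
    rw [dt_comb3, z0, dt_self1, dt_self2, ← dt_cyc] at q1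
    rw [dt_comb3, z0, dt_self1, dt_self2, dt_cyc, dt_cyc, dt_cyc, ← dt_cyc, ← dt_cyc] at q2
    rw [dt_comb3, z0, dt_self1, dt_self2] at q3
    have h41 : c4 = c1 := by
      have : (c4 - c1) = 0 := by
        have : (c4 - c1) * dt (YZ m (v+1+t)) (YZ m (v+2+t)) (YZ m (v+3+t)) = 0 := by linarith
        exact (mul_eq_zero.1 this).resolve_right D
      linarith
    have h43 : c4 = c3 := by
      have : k * (c4 - c3) * dt (YZ m (v+1+t)) (YZ m (v+2+t)) (YZ m (v+3+t)) = 0 := by linarith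
      have := (mul_eq_zero.1 ((mul_eq_zero.1 this).resolve_right D)).resolve_left hk.ne'
      linarith
    have h42 : c2 = c4 := by
      have e := dt_cyc (YZ m (v+1+t)) (YZ m (v+2+t)) (YZ m (v+3+t))
      have e' := dt_cyc (YZ m (v+3+t)) (YZ m (v+1+t)) (YZ m (v+2+t))
      have : k * (c2 - c4) * dt (YZ m (v+1+t)) (YZ m (v+2+t)) (YZ m (v+3+t)) = 0 := by
        first
          | linarith
          | (rw [← e'] ; linarith)
      have := (mul_eq_zero.1 ((mul_eq_zero.1 this).resolve_right D)).resolve_left hk.ne'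
      linarith
    subst h41
    rw [← h43, h42] at E1
    have F : (α - c4) • YZ m (v + t) + β • YZ m (g (v+t)) = 0 := by
      ext i
      have := congrFun E1 i
      simp only [Pi.smul_apply, Pi.add_apply, Pi.sub_apply, Pi.zero_apply, smul_eq_mul] at this ⊢
      linear_combination -this
    rw [← gv] at F
    have G := congrArg (dt (YZ m (g v)) (YZ m v)) F
    rw [dt_comb2, dt_self1, z0] at G
    have H := dt_ne m (g v) v (g (g v)) huv huv2.symm (fun h => huv (hg.1 h).symm)
    apply H
    have : β * dt (YZ m (g v)) (YZ m v) (YZ m (g (g v))) = 0 := by linarith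
    exact (mul_eq_zero.1 this).resolve_left hβ.ne'

lemma extreme_form (m : ℕ) [NeZero m] (x : Fin 3 → ℝ) (hx : IsExtremeVec (Kcirc m) x) :
    ∃ (a : ZMod m) (c : ℝ), 0 < c ∧ x = c • YZ m a := by
  obtain ⟨⟨d, hd, hxd⟩, hx0, hext⟩ := hx
  have hY : ∀ j : Fin m, (![Real.cos (2 * ((j : ℕ) + 1) * π / m),
      Real.sin (2 * ((j : ℕ) + 1) * π / m), 1] : Fin 3 → ℝ) = YZ m (((j : ℕ) + 1 : ℤ) : ZMod m) := by
    intro j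
    rw [YZ_cast]
    simp [YI]
  simp only [hY] at hxd
  have : ∃ j, d j ≠ 0 := by
    by_contra h
    push Not at h
    apply hx0
    rw [hxd]
    simp [h]
  obtain ⟨j, hj⟩ := this
  have hjp : 0 < d j := lt_of_le_of_ne (hd j) hj.symm
  have key := (hext (d j • YZ m (((j : ℕ) + 1 : ℤ) : ZMod m)) ?_
    (∑ i, (if i = j then 0 else d i) • YZ m (((i : ℕ) + 1 : ℤ) : ZMod m)) ?_ ?_).1
  · obtain ⟨a, ha, hax⟩ := key
    have ha0 : a ≠ 0 := by
      rintro rfl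
      have := congrFun hax 2
      simp [YZ, YI] at this
      exact hj this
    have hap : 0 < a := lt_of_le_of_ne ha ha0.symm
    refine ⟨(((j : ℕ) + 1 : ℤ) : ZMod m), d j / a, div_pos hjp hap, ?_⟩
    rw [div_eq_inv_mul, mul_smul, hax, smul_smul, inv_mul_cancel₀ ha0, one_smul]
  · refine ⟨fun i => if i = j then d j else 0, ?_, ?_⟩
    · intro i; dsimp only; split_ifs
      · exact hd j
      · exact le_rfl
    · simp only [hY]
      simp [ite_smul]
  · refine ⟨fun i => if i = j then 0 else d i, ?_, ?_⟩
    · intro i; dsimp only; split_ifs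
      · exact le_rfl
      · exact hd i
    · simp only [hY]
  · rw [hxd]
    have : d j • YZ m (((j : ℕ) + 1 : ℤ) : ZMod m) =
      ∑ i, (if i = j then d j else 0) • YZ m (((i : ℕ) + 1 : ℤ) : ZMod m) := by simp [ite_smul]
    rw [this, ← Finset.sum_add_distrib]
    apply Finset.sum_congr rfl
    intro i _
    by_cases h : i = j
    · simp [h]
    · simp [h]

/-- For `m ≥ 5` there is no `K`-primitive matrix `A` (for `K = Kcirc m`) together with an
enumeration `x_1, …, x_m` of pairwise non-proportional extreme vectors of `K` such that
`A x_i` is a positive multiple of `x_{i+1}` for `i = 1, …, m-1` and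
`A x_m = α x_1 + β x_2` with `α, β > 0`. -/
theorem stmt_12 (m : ℕ) (hm : 5 ≤ m) :
    ¬ ∃ (A : Matrix (Fin 3) (Fin 3) ℝ) (x : Fin m → Fin 3 → ℝ),
      KPrimitive (Kcirc m) A ∧
      (∀ i : Fin m, IsExtremeVec (Kcirc m) (x i)) ∧
      (∀ i j : Fin m, i ≠ j → ∀ c : ℝ, x j ≠ c • x i) ∧
      (∀ i : Fin m, ∀ h : (i : ℕ) + 1 < m,
        ∃ c : ℝ, 0 < c ∧ A.mulVec (x i) = c • x ⟨(i : ℕ) + 1, h⟩) ∧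
      (∃ α β : ℝ, 0 < α ∧ 0 < β ∧
        A.mulVec (x ⟨m - 1, by omega⟩) =
          α • x ⟨0, by omega⟩ + β • x ⟨1, by omega⟩) := by
  rintro ⟨A, x, -, hext, hnp, hstep, α, β, hα, hβ, hlast⟩
  have : NeZero m := ⟨by omega⟩
  choose p e he hxe using fun i => extreme_form m (x i) (hext i)
  have pinj : Function.Injective p := by
    intro i j hij
    by_contra h
    apply hnp i j h (e j / e i)
    rw [hxe i, hxe j, hij, smul_smul, div_mul_cancel₀ _ (he i).ne']
  have pbij : Function.Bijective p := by
    rw [Fintype.bijective_iff_injective_and_card]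
    exact ⟨pinj, by simp [ZMod.card]⟩
  obtain ⟨q, hq1, hq2⟩ := Function.bijective_iff_has_inverse.1 pbij
  let σ : Fin m → Fin m := fun i => if h : (i : ℕ) + 1 < m then ⟨i + 1, h⟩ else ⟨0, by omega⟩
  have σval : ∀ i, (σ i : ℕ) = if (i : ℕ) + 1 < m then (i : ℕ) + 1 else 0 := by
    intro i
    simp only [σ]
    split_ifs <;> rfl
  have σinj : Function.Injective σ := by
    intro i j h
    have h1 := σval i
    have h2 := σval j
    rw [h] at h1
    rw [h1] at h2
    apply Fin.ext
    have := i.2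
    have := j.2
    split_ifs at h2 <;> omega
  have σbij : Function.Bijective σ := Finite.injective_iff_bijective.1 σinj
  have qbij : Function.Bijective q := Function.bijective_iff_has_inverse.2 ⟨p, hq2, hq1⟩
  let g : ZMod m → ZMod m := fun s => p (σ (q s))
  have hg : Function.Bijective g := pbij.comp (σbij.comp qbij)
  have gp : ∀ i, g (p i) = p (σ i) := by intro i; simp only [g, hq1 i]
  let l : Fin m := ⟨m - 1, by omega⟩
  have σl : σ l = ⟨0, by omega⟩ := by
    apply Fin.ext; rw [σval]; simp only [l]; split_ifs <;> omega
  have σ0 : σ ⟨0, by omega⟩ = ⟨1, by omega⟩ := by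
    apply Fin.ext; rw [σval]; simp only; split_ifs <;> omega
  have hAY : ∀ i, A *ᵥ YZ m (p i) = (e i)⁻¹ • (A *ᵥ x i) := by
    intro i
    rw [hxe i, Matrix.mulVec_smul, smul_smul, inv_mul_cancel₀ (he i).ne', one_smul]
  have hall : ∀ s, ∃ c : ℝ, 0 < c ∧ (s ≠ p l → A *ᵥ YZ m s = c • YZ m (g s)) := by
    intro s
    obtain ⟨i, rfl⟩ := pbij.2 s
    by_cases h : (i : ℕ) + 1 < m
    · obtain ⟨c, hc, hci⟩ := hstep i h
      refine ⟨(e i)⁻¹ * (c * e ⟨i + 1, h⟩), ?_, fun _ => ?_⟩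
      · have := he i
        have := he ⟨i + 1, h⟩
        positivity
      · have hσ : σ i = ⟨i + 1, h⟩ := by
          apply Fin.ext; rw [σval, if_pos h]
        rw [hAY, hci, gp, hσ, mul_smul, mul_smul, ← hxe]
    · refine ⟨1, one_pos, fun h' => absurd ?_ h'⟩
      congr 1
      apply Fin.ext
      have := i.2
      simp only [l]; omega
  choose c hc hAc using hall
  have hA : A.det ≠ 0 := by
    intro h0
    have d := dt_mulVec A (YZ m (p ⟨0, by omega⟩)) (YZ m (p ⟨1, by omega⟩)) (YZ m (p ⟨2, by omega⟩))
    rw [h0, zero_mul] at d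
    have nl : ∀ (k : ℕ) (hk : k < m), k < 3 → p ⟨k, hk⟩ ≠ p l := by
      intro k hk h3 h
      have := congrArg Fin.val (pinj h)
      simp only [l] at this
      omega
    rw [hAc _ (nl 0 _ (by norm_num)), hAc _ (nl 1 _ (by norm_num)), hAc _ (nl 2 _ (by norm_num)),
      dt_smul3] at d
    have cc := mul_pos (mul_pos (hc (p ⟨0, by omega⟩)) (hc (p ⟨1, by omega⟩)))
      (hc (p ⟨2, by omega⟩))
    have d' := (mul_eq_zero.1 d).resolve_left cc.ne'
    refine dt_ne m _ _ _ ?_ ?_ ?_ d' <;>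
    · intro h
      have := pinj (hg.1 h)
      simp at this
  refine core m hm A hA g hg (p l) ?_ ?_ c hc hAc ((e l)⁻¹ * (α * e ⟨0, by omega⟩))
    ((e l)⁻¹ * (β * e ⟨1, by omega⟩)) ?_ ?_ ?_
  · rw [gp, σl]
    intro h
    have := congrArg Fin.val (pinj h)
    simp only [l] at this
    omega
  · rw [gp l, σl, gp, σ0]
    intro h
    have := congrArg Fin.val (pinj h)
    simp only [l] at this
    omega
  · exact mul_pos (inv_pos.2 (he _)) (mul_pos hα (he _))
  · exact mul_pos (inv_pos.2 (he _)) (mul_pos hβ (he _))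
  · rw [hAY, gp l, σl, gp, σ0]
    have : A *ᵥ x l = _ := hlast
    rw [this, smul_add, mul_smul, mul_smul, mul_smul, mul_smul, ← hxe, ← hxe]
end
end

section
/- Let m, n be integers with 3 ≤ n ≤ m. Then: (a) for every K ∈ P(m,n) and every K-primitive matrix A, γ(A) ≤ (n−1)(m−1) + 1; (b) if m is even, or m and n are both odd, then there exist K ∈ P(m,n) and a K-primitive matrix A with γ(A) = (n−1)(m−1) + 1, so the maximum of γ(K) over K ∈ P(m,n) equals (n−1)(m−1) + 1; (c) if m is odd and n is even, then there exist K ∈ P(m,n) and a K-primitive matrix A with γ(A) ≥ (n−1)(m−1), so the maximum of γ(K) over K ∈ P(m,n) is at least (n−1)(m−1) and at most (n−1)(m−1) + 1. -/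
open Matrix Set Real

noncomputable section

/-! ### Interior of a proper cone via positive functionals -/

lemma pc_support {n : ℕ} {K : Set (Fin n → ℝ)} (hK : IsProperCone K) {x : Fin n → ℝ}
    (hx : x ∈ K) (hxi : x ∉ interior K) :
    ∃ f : (Fin n → ℝ) →ₗ[ℝ] ℝ, f ≠ 0 ∧ (∀ y ∈ K, 0 ≤ f y) ∧ f x = 0 := by
  obtain ⟨hcl, hadd, hsm, hpt, hnonempty⟩ := hK
  have hconv : Convex ℝ K := by
    intro a ha b hb s t hs ht _
    exact hadd _ (hsm s hs a ha) _ (hsm t ht b hb)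
  obtain ⟨f, hf⟩ := geometric_hahn_banach_open_point hconv.interior isOpen_interior hxi
  obtain ⟨z, hz⟩ := hnonempty
  have hzero : (0 : Fin n → ℝ) ∈ K := by simpa using hsm 0 le_rfl x hx
  have hcomb : ∀ y ∈ K, ∀ a : ℝ, 0 ≤ a → ∀ b : ℝ, 0 < b → a * f y + b * f z < f x := by
    intro y hy a ha b hb
    have hmem : a • y + b • z ∈ interior K := by
      rw [mem_interior] at hz ⊢
      obtain ⟨U, hUK, hU, hzU⟩ := hz
      refine ⟨(fun w => b⁻¹ • (w - a • y)) ⁻¹' U, ?_, hU.preimage (by fun_prop), ?_⟩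
      · intro w hw
        have h1 : b⁻¹ • (w - a • y) ∈ K := hUK hw
        have h2 := hadd _ (hsm a ha y hy) _ (hsm b hb.le _ h1)
        rw [smul_smul, mul_inv_cancel₀ hb.ne', one_smul] at h2
        simpa using h2
      · simp [smul_smul, inv_mul_cancel₀ hb.ne', hzU]
    have := hf _ hmem
    simpa using this
  have hle : ∀ y ∈ K, f y ≤ 0 := by
    intro y hy
    by_contra hcon
    push Not at hcon
    have := hcomb y hy ((|f x| + |f z|) / f y) (by positivity) 1 one_pos
    rw [div_mul_cancel₀ _ hcon.ne'] at this
    have h1 := le_abs_self (f x)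
    have h2 := neg_abs_le (f z)
    linarith
  have hx0 : f x = 0 := by
    apply le_antisymm (hle x hx)
    by_contra hcon
    push Not at hcon
    by_cases h0 : f z = 0
    · have := hcomb 0 hzero 0 le_rfl 1 one_pos
      simp [h0] at this
      linarith
    · have hz0 : f z < 0 := lt_of_le_of_ne (hle z (interior_subset hz)) h0
      have := hcomb 0 hzero 0 le_rfl (f x / f z) (div_pos_of_neg_of_neg hcon hz0)
      rw [div_mul_cancel₀ _ h0] at this
      linarith
  refine ⟨-(f : (Fin n → ℝ) →ₗ[ℝ] ℝ), ?_, ?_, ?_⟩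
  · intro h
    have h1 := hcomb 0 hzero 0 le_rfl 1 one_pos
    have h2 := congrArg (fun g => g z) h
    simp at h2
    simp [h2, hx0] at h1
  · intro y hy
    simpa using hle y hy
  · simpa using hx0

lemma pc_pos {n : ℕ} {K : Set (Fin n → ℝ)} {f : (Fin n → ℝ) →ₗ[ℝ] ℝ} (hf0 : f ≠ 0)
    (hf : ∀ y ∈ K, 0 ≤ f y) {x : Fin n → ℝ} (hx : x ∈ interior K) : 0 < f x := by
  obtain ⟨v, hv⟩ : ∃ v, f v ≠ 0 := by
    by_contra h
    push Not at h
    exact hf0 (LinearMap.ext (by simpa using h))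
  have hc : Filter.Tendsto (fun t : ℝ => x - (t * f v) • v) (nhds 0) (nhds x) := by
    have : Continuous (fun t : ℝ => x - (t * f v) • v) := by fun_prop
    simpa using this.tendsto 0
  have hev := hc.eventually (mem_interior_iff_mem_nhds.mp hx)
  obtain ⟨ε, hε, hb⟩ := Metric.eventually_nhds_iff.mp hev
  have h1 := hf _ (hb (y := ε / 2) (by simp [abs_of_pos hε]; linarith))
  simp only [map_sub, map_smul, smul_eq_mul] at h1
  have : 0 < ε / 2 * f v * f v := by
    have : 0 < f v * f v := mul_self_pos.mpr hv
    rw [mul_assoc]; positivity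
  linarith

lemma pc_int_iff {n : ℕ} {K : Set (Fin n → ℝ)} (hK : IsProperCone K) {x : Fin n → ℝ}
    (hx : x ∈ K) : x ∈ interior K ↔
      ∀ f : (Fin n → ℝ) →ₗ[ℝ] ℝ, f ≠ 0 → (∀ y ∈ K, 0 ≤ f y) → f x ≠ 0 := by
  constructor
  · intro h f hf0 hf
    exact (pc_pos hf0 hf h).ne'
  · intro h
    by_contra hcon
    obtain ⟨f, h1, h2, h3⟩ := pc_support hK hx hcon
    exact h f h1 h2 h3

lemma kn_pow {n : ℕ} {K : Set (Fin n → ℝ)} {A : Matrix (Fin n) (Fin n) ℝ} (hA : KNonneg K A)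
    (k : ℕ) : KNonneg K (A ^ k) := by
  induction k with
  | zero => intro x hx; simpa using hx
  | succ k ih =>
    intro x hx
    rw [pow_succ', ← Matrix.mulVec_mulVec]
    exact hA _ (ih x hx)

lemma pc_exists_ne {n : ℕ} (hn : 0 < n) {K : Set (Fin n → ℝ)} (hK : IsProperCone K) :
    ∃ z ∈ K, z ≠ 0 := by
  by_contra hcon
  push Not at hcon
  obtain ⟨z, hz⟩ := hK.2.2.2.2
  have h1 : K ⊆ {0} := fun x hx => hcon x hx
  have h2 := interior_mono h1 hz
  have : Nonempty (Fin n) := ⟨⟨0, hn⟩⟩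
  rw [interior_singleton] at h2
  exact h2

lemma pc_zero_notin {n : ℕ} (hn : 0 < n) {K : Set (Fin n → ℝ)} (hK : IsProperCone K) :
    (0 : Fin n → ℝ) ∉ interior K := by
  intro h
  have hnear : ∃ v ∈ interior K, v ∈ -K ∧ v ≠ 0 := by
    have h0 : K ∩ (-K) ∈ nhds (0 : Fin n → ℝ) := by
      have h1 := mem_interior_iff_mem_nhds.mp h
      refine Filter.inter_mem h1 ?_
      have : Filter.Tendsto (fun x : Fin n → ℝ => -x) (nhds 0) (nhds 0) := by
        simpa using (continuous_neg (G := Fin n → ℝ)).tendsto 0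
      exact this h1
    rw [hK.2.2.2.1] at h0
    exfalso
    have : Nonempty (Fin n) := ⟨⟨0, hn⟩⟩
    have := mem_interior_iff_mem_nhds.mpr h0
    rw [interior_singleton] at this
    exact this
  obtain ⟨v, hv, hv', hv0⟩ := hnear
  have : v ∈ K ∩ (-K) := ⟨interior_subset hv, hv'⟩
  rw [hK.2.2.2.1] at this
  exact hv0 this

/-- primitive matrices do not kill positive functionals -/
lemma kp_comp_ne {n : ℕ} (hn : 0 < n) {K : Set (Fin n → ℝ)} (hK : IsProperCone K)
    {A : Matrix (Fin n) (Fin n) ℝ} (hA : KPrimitive K A) {f : (Fin n → ℝ) →ₗ[ℝ] ℝ}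
    (hf0 : f ≠ 0) (hf : ∀ y ∈ K, 0 ≤ f y) (t : ℕ) : f ∘ₗ (A ^ t).mulVecLin ≠ 0 := by
  obtain ⟨hA1, k, hk, hpos⟩ := hA
  obtain ⟨z, hz, hz0⟩ := pc_exists_ne hn hK
  -- A^(t*k) z is interior
  have key : ∀ t : ℕ, ∀ x ∈ K, x ≠ 0 → (A ^ (k * (t + 1))) *ᵥ x ∈ interior K := by
    intro t
    induction t with
    | zero => intro x hx hx0; simpa using hpos x hx hx0
    | succ t ih =>
      intro x hx hx0
      have h1 := ih x hx hx0
      have h2 := hpos _ (interior_subset h1) (fun h => pc_zero_notin hn hK (h ▸ h1))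
      rw [Matrix.mulVec_mulVec, ← pow_add] at h2
      rw [show k * (t + 1 + 1) = k + k * (t + 1) by ring]
      exact h2
  intro h
  have h1 := pc_pos hf0 hf (key t z hz hz0)
  have h2 := congrArg (fun g => g ((A ^ (k * (t + 1) - t)) *ᵥ z)) h
  have hle : t ≤ k * (t + 1) := by nlinarith
  simp only [LinearMap.comp_apply, Matrix.mulVecLin_apply, Matrix.mulVec_mulVec, ← pow_add,
    LinearMap.zero_apply, Nat.add_sub_cancel' hle] at h2
  exact h1.ne' h2

lemma comp_nonneg {n : ℕ} {K : Set (Fin n → ℝ)} {A : Matrix (Fin n) (Fin n) ℝ}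
    (hA : KNonneg K A) {f : (Fin n → ℝ) →ₗ[ℝ] ℝ} (hf : ∀ y ∈ K, 0 ≤ f y) (t : ℕ) :
    ∀ y ∈ K, 0 ≤ (f ∘ₗ (A ^ t).mulVecLin) y := by
  intro y hy
  exact hf _ (kn_pow hA t y hy)

lemma kp_int {n : ℕ} (hn : 0 < n) {K : Set (Fin n → ℝ)} (hK : IsProperCone K)
    {A : Matrix (Fin n) (Fin n) ℝ} (hA : KPrimitive K A) {x : Fin n → ℝ}
    (hx : x ∈ interior K) (t : ℕ) : (A ^ t) *ᵥ x ∈ interior K := by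
  rw [pc_int_iff hK (kn_pow hA.1 t x (interior_subset hx))]
  intro f hf0 hf
  exact (pc_pos (kp_comp_ne hn hK hA hf0 hf t) (comp_nonneg hA.1 hf t) hx).ne'

lemma kp_ne_zero {n : ℕ} (hn : 0 < n) {K : Set (Fin n → ℝ)} (hK : IsProperCone K)
    {A : Matrix (Fin n) (Fin n) ℝ} {k : ℕ} (hk : 0 < k) (hpos : KPositive K (A ^ k))
    {x : Fin n → ℝ} (hx : x ∈ K) (hx0 : x ≠ 0) : A *ᵥ x ≠ 0 := by
  intro h
  have h1 := hpos x hx hx0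
  obtain ⟨j, rfl⟩ : ∃ j, k = j + 1 := ⟨k - 1, by omega⟩
  rw [pow_succ, ← Matrix.mulVec_mulVec, h, Matrix.mulVec_zero] at h1
  exact pc_zero_notin hn hK h1

/-! ### Minimal generators -/

lemma coneGen_mem {n m : ℕ} (y : Fin m → Fin n → ℝ) (i : Fin m) : y i ∈ ConeGen y := by
  refine ⟨Pi.single i 1, ?_, ?_⟩
  · intro j
    by_cases h : j = i
    · subst h; simp
    · simp [h]
  · rw [Finset.sum_eq_single i]
    · simp
    · intro b _ hb; simp [hb]
    · simp

lemma coneGen_zero {n m : ℕ} (y : Fin m → Fin n → ℝ) : 0 ∈ ConeGen y :=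
  ⟨0, by simp, by simp⟩

lemma coneGen_add {n m : ℕ} (y : Fin m → Fin n → ℝ) {a b : Fin n → ℝ} (ha : a ∈ ConeGen y)
    (hb : b ∈ ConeGen y) : a + b ∈ ConeGen y := by
  obtain ⟨c, hc, rfl⟩ := ha
  obtain ⟨d, hd, rfl⟩ := hb
  exact ⟨c + d, fun j => add_nonneg (hc j) (hd j), by simp [add_smul, Finset.sum_add_distrib]⟩

lemma coneGen_smul {n m : ℕ} (y : Fin m → Fin n → ℝ) {r : ℝ} (hr : 0 ≤ r) {a : Fin n → ℝ}
    (ha : a ∈ ConeGen y) : r • a ∈ ConeGen y := by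
  obtain ⟨c, hc, rfl⟩ := ha
  exact ⟨r • c, fun j => mul_nonneg hr (hc j), by simp [Finset.smul_sum, mul_smul]⟩

lemma coneGen_sum {n m : ℕ} (y : Fin m → Fin n → ℝ) {ι : Type*} (s : Finset ι)
    (g : ι → Fin n → ℝ) (h : ∀ i ∈ s, g i ∈ ConeGen y) : ∑ i ∈ s, g i ∈ ConeGen y := by
  classical
  induction s using Finset.induction_on with
  | empty => simpa using coneGen_zero y
  | insert a s ha ih =>
    rw [Finset.sum_insert ha]
    exact coneGen_add y (h a (by simp)) (ih fun i hi => h i (by simp [hi]))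

lemma coneGen_subset {n m k : ℕ} (y : Fin m → Fin n → ℝ) (z : Fin k → Fin n → ℝ)
    (h : ∀ i, y i ∈ ConeGen z) : ConeGen y ⊆ ConeGen z := by
  rintro x ⟨c, hc, rfl⟩
  exact coneGen_sum z _ _ fun i _ => coneGen_smul z (hc i) (h i)

lemma poly_min {n : ℕ} {K : Set (Fin n → ℝ)} (hK : IsPolyhedralCone K) :
    ∃ (m : ℕ) (y : Fin m → Fin n → ℝ), K = ConeGen y ∧ (∀ i, y i ≠ 0) ∧
      (ExtremeRays K).ncard = m ∧
      ∀ (m' : ℕ) (y' : Fin m' → Fin n → ℝ), K = ConeGen y' → m ≤ m' := by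
  classical
  obtain ⟨⟨hcl, hadd, hsm, hpt, hnonempty⟩, hex⟩ := hK
  have hmin := fun m' (h : ∃ y : Fin m' → Fin n → ℝ, K = ConeGen y) => Nat.find_min' hex h
  obtain ⟨y, hy⟩ := Nat.find_spec hex
  generalize Nat.find hex = m at *
  have hyK : ∀ i, y i ∈ K := fun i => hy ▸ coneGen_mem y i
  have h0K : (0 : Fin n → ℝ) ∈ K := hy ▸ coneGen_zero y
  have hpt' : ∀ a ∈ K, ∀ b ∈ K, a + b = 0 → a = 0 := by
    intro a ha b hb hab
    have : a ∈ K ∩ (-K) := ⟨ha, by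
      rw [Set.mem_neg, neg_eq_of_add_eq_zero_right hab]; exact hb⟩
    rw [hpt] at this
    exact this
  -- no generator is redundant
  have hred : ∀ i : Fin m, ∀ c : Fin m → ℝ, (∀ j, 0 ≤ c j) → c i = 0 →
      y i ≠ ∑ j, c j • y j := by
    intro i c hc hci hyi
    obtain ⟨k, rfl⟩ : ∃ k, m = k + 1 := ⟨m - 1, by have := i.2; omega⟩
    have : k + 1 ≤ k := by
      apply hmin k ⟨fun j => y (i.succAbove j), ?_⟩
      apply Set.Subset.antisymm
      · rw [hy]
        apply coneGen_subset
        intro j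
        by_cases hj : j = i
        · subst hj
          rw [hyi, Fin.sum_univ_succAbove _ j, hci, zero_smul, zero_add]
          exact ⟨fun l => c (j.succAbove l), fun l => hc _, rfl⟩
        · obtain ⟨l, rfl⟩ := Fin.exists_succAbove_eq hj
          exact coneGen_mem (fun j => y (i.succAbove j)) l
      · rw [hy]
        exact coneGen_subset _ _ fun j => coneGen_mem y _
    omega
  have hy0 : ∀ i, y i ≠ 0 := by
    intro i h
    exact hred i 0 (by simp) rfl (by simpa using h)
  have hterm : ∀ (c : Fin m → ℝ), (∀ j, 0 ≤ c j) → ∑ j, c j • y j = 0 → ∀ j, c j = 0 := by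
    intro c hc hs j
    rw [← Finset.add_sum_erase _ _ (Finset.mem_univ j)] at hs
    have := hpt' _ (hsm _ (hc j) _ (hyK j)) _ (by
      rw [hy]; exact coneGen_sum y _ _ fun i _ => coneGen_smul y (hc i) (coneGen_mem y i)) hs
    exact (smul_eq_zero.mp this).resolve_right (hy0 j)
  have hext : ∀ i, IsExtremeVec K (y i) := by
    intro i
    have main : ∀ a ∈ K, ∀ b ∈ K, y i = a + b → ∃ r : ℝ, 0 ≤ r ∧ a = r • y i := by
      intro a ha b hb hab
      rw [hy] at ha hb
      obtain ⟨α, hα, rfl⟩ := ha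
      obtain ⟨β, hβ, rfl⟩ := hb
      have hsum : y i = ∑ j, (α j + β j) • y j := by
        rw [hab, ← Finset.sum_add_distrib]
        exact Finset.sum_congr rfl fun j _ => (add_smul _ _ _).symm
      have hsum' : (1 - (α i + β i)) • y i = ∑ j, (Function.update (α + β) i 0) j • y j := by
        rw [← Finset.add_sum_erase _ _ (Finset.mem_univ i)] at hsum ⊢
        rw [Function.update_self, zero_smul, zero_add, sub_smul, one_smul]
        nth_rewrite 1 [hsum]
        rw [add_sub_cancel_left]
        apply Finset.sum_congr rfl
        intro j hj
        rw [Function.update_of_ne (Finset.ne_of_mem_erase hj)]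
        rfl
      have hupd : ∀ j, 0 ≤ (Function.update (α + β) i 0) j := by
        intro j
        by_cases hj : j = i
        · subst hj; simp
        · rw [Function.update_of_ne hj]; exact add_nonneg (hα j) (hβ j)
      have hge : 1 ≤ α i + β i := by
        by_contra hlt
        push Not at hlt
        have hpos : 0 < 1 - (α i + β i) := by linarith
        apply hred i (fun j => (1 - (α i + β i))⁻¹ * (Function.update (α + β) i 0) j)
        · intro j; exact mul_nonneg (inv_pos.mpr hpos).le (hupd j)
        · simp
        · simp_rw [mul_smul]
          rw [← Finset.smul_sum, ← hsum', smul_smul, inv_mul_cancel₀ hpos.ne', one_smul]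
      have hz := hterm (fun j => (Function.update (α + β) i (α i + β i - 1)) j) (by
        intro j
        by_cases hj : j = i
        · subst hj; simp; linarith
        · rw [Function.update_of_ne hj]; exact add_nonneg (hα j) (hβ j)) (by
        rw [← Finset.add_sum_erase _ _ (Finset.mem_univ i)] at hsum' ⊢
        rw [Function.update_self] at hsum' ⊢
        rw [zero_smul, zero_add] at hsum'
        rw [show α i + β i - 1 = -(1 - (α i + β i)) by ring, neg_smul, hsum', neg_add_eq_zero]
        apply Finset.sum_congr rfl
        intro j hj
        rw [Function.update_of_ne (Finset.ne_of_mem_erase hj),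
          Function.update_of_ne (Finset.ne_of_mem_erase hj)])
      refine ⟨α i, hα i, ?_⟩
      apply Finset.sum_eq_single i
      · intro j _ hj
        have := hz j
        rw [Function.update_of_ne hj] at this
        have h1 := hα j
        have h2 := hβ j
        simp only [Pi.add_apply] at this
        rw [show α j = 0 by linarith, zero_smul]
      · simp
    refine ⟨hyK i, hy0 i, fun a ha b hb hab => ⟨main a ha b hb hab, ?_⟩⟩
    exact main b hb a ha (by rw [hab, add_comm])
  refine ⟨m, y, hy, hy0, ?_, fun m' y' h => hmin m' ⟨y', h⟩⟩
  have hrange : ExtremeRays K = Set.range (fun i : Fin m => {z | ∃ c : ℝ, 0 ≤ c ∧ z = c • y i}) := by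
    ext R
    constructor
    · rintro ⟨x, ⟨hxK, hx0, hxe⟩, rfl⟩
      have hxK' := hxK
      rw [hy] at hxK'
      obtain ⟨c, hc, hxc⟩ := hxK'
      obtain ⟨i, hi⟩ : ∃ i, 0 < c i := by
        by_contra hcon
        push Not at hcon
        apply hx0
        rw [hxc]
        exact Finset.sum_eq_zero fun i _ => by
          rw [le_antisymm (hcon i) (hc i), zero_smul]
      rw [← Finset.add_sum_erase _ _ (Finset.mem_univ i)] at hxc
      obtain ⟨⟨a, ha, hax⟩, -⟩ := hxe _ (hsm _ (hc i) _ (hyK i)) _ (by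
        rw [hy]; exact coneGen_sum y _ _ fun i _ => coneGen_smul y (hc i) (coneGen_mem y i)) hxc
      have ha' : 0 < a := by
        rcases ha.lt_or_eq with h | h
        · exact h
        · rw [← h, zero_smul] at hax
          exact absurd hax (smul_ne_zero hi.ne' (hy0 i))
      refine ⟨i, ?_⟩
      ext z
      constructor
      · rintro ⟨r, hr, rfl⟩
        refine ⟨r * (c i)⁻¹ * a, by positivity, ?_⟩
        rw [mul_smul, ← hax, smul_smul, mul_assoc, inv_mul_cancel₀ hi.ne', mul_one]
      · rintro ⟨r, hr, rfl⟩
        refine ⟨r * a⁻¹ * c i, by positivity, ?_⟩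
        rw [mul_smul, hax, smul_smul, mul_assoc, inv_mul_cancel₀ ha'.ne', mul_one]
    · rintro ⟨i, rfl⟩
      exact ⟨y i, hext i, rfl⟩
  have hinj : Function.Injective
      (fun i : Fin m => {z : Fin n → ℝ | ∃ c : ℝ, 0 ≤ c ∧ z = c • y i}) := by
    intro i j hij
    by_contra hne
    have h1 : y i ∈ {z : Fin n → ℝ | ∃ c : ℝ, 0 ≤ c ∧ z = c • y i} := ⟨1, zero_le_one, by simp⟩
    simp only at hij
    rw [hij] at h1
    obtain ⟨c, hc, hci⟩ := h1
    apply hred i (Pi.single j c) _ _ _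
    · intro l
      by_cases h : l = j
      · subst h; simpa using hc
      · simp [h]
    · simp [hne]
    · rw [Finset.sum_eq_single j]
      · simpa using hci
      · intro b _ hb; simp [hb]
      · simp
  rw [hrange, ← Nat.card_coe_set_eq, Nat.card_range_of_injective hinj, Nat.card_eq_fintype_card,
    Fintype.card_fin]

/-! ### The upper bound -/

/-- `y j` lies in the face generated by `A ^ t *ᵥ y i` (dual formulation). -/
def Rch {n m : ℕ} (K : Set (Fin n → ℝ)) (A : Matrix (Fin n) (Fin n) ℝ) (y : Fin m → Fin n → ℝ)
    (t : ℕ) (i j : Fin m) : Prop :=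
  ∀ f : (Fin n → ℝ) →ₗ[ℝ] ℝ, (∀ z ∈ K, 0 ≤ f z) → f ((A ^ t) *ᵥ y i) = 0 → f (y j) = 0

lemma Rch.trans {n m : ℕ} {K : Set (Fin n → ℝ)} {A : Matrix (Fin n) (Fin n) ℝ}
    (hA : KNonneg K A) {y : Fin m → Fin n → ℝ} {s t : ℕ} {i j k : Fin m}
    (h1 : Rch K A y s i j) (h2 : Rch K A y t j k) : Rch K A y (s + t) i k := by
  intro f hf h
  apply h2 f hf
  apply h1 (f ∘ₗ (A ^ t).mulVecLin) (comp_nonneg hA hf t)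
  rw [add_comm, pow_add, ← Matrix.mulVec_mulVec] at h
  simpa using h

lemma Rch.refl {n m : ℕ} {K : Set (Fin n → ℝ)} {A : Matrix (Fin n) (Fin n) ℝ}
    {y : Fin m → Fin n → ℝ} (i : Fin m) : Rch K A y 0 i i := by
  intro f _ h
  simpa using h

lemma Rch.iter {n m : ℕ} {K : Set (Fin n → ℝ)} {A : Matrix (Fin n) (Fin n) ℝ}
    (hA : KNonneg K A) {y : Fin m → Fin n → ℝ} {σ : Fin m → Fin m}
    (hσ : ∀ i, Rch K A y 1 i (σ i)) (t : ℕ) (i : Fin m) : Rch K A y t i (σ^[t] i) := by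
  induction t with
  | zero => exact Rch.refl i
  | succ t ih =>
    rw [Function.iterate_succ_apply']
    exact ih.trans hA (hσ _)

/-- Cayley-Hamilton: if a functional kills `x, Bx, …, B^(n-1)x` then it kills all `B^k x`. -/
lemma ch_kill {n : ℕ} (hn : 0 < n) (B : Matrix (Fin n) (Fin n) ℝ) (x : Fin n → ℝ)
    (f : (Fin n → ℝ) →ₗ[ℝ] ℝ) (h : ∀ k < n, f ((B ^ k) *ᵥ x) = 0) (k : ℕ) :
    f ((B ^ k) *ᵥ x) = 0 := by
  induction k using Nat.strong_induction_on with
  | _ k ih =>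
    by_cases hk : k < n
    · exact h k hk
    · have hch := Matrix.aeval_self_charpoly B
      have hdeg : B.charpoly.natDegree = n := by
        rw [Matrix.charpoly_natDegree_eq_dim, Fintype.card_fin]
      have hmon := Matrix.charpoly_monic B
      rw [Polynomial.aeval_eq_sum_range, hdeg, Finset.sum_range_succ] at hch
      have hl : B.charpoly.coeff n = 1 := by
        have := hmon.coeff_natDegree
        rwa [hdeg] at this
      rw [hl, one_smul] at hch
      have h2 : B ^ k = - ∑ i ∈ Finset.range n, B.charpoly.coeff i • B ^ (k - n + i) := by
        have h3 : B ^ k = B ^ (k - n) * B ^ n := by rw [← pow_add]; congr 1; omega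
        rw [h3, eq_neg_of_add_eq_zero_right hch, mul_neg, Finset.mul_sum]
        congr 1
        apply Finset.sum_congr rfl
        intro i _
        rw [Algebra.mul_smul_comm, pow_add]
      rw [h2, Matrix.neg_mulVec, Matrix.sum_mulVec, map_neg, map_sum, neg_eq_zero]
      apply Finset.sum_eq_zero
      intro i hi
      rw [Matrix.smul_mulVec, map_smul, ih _ (by have := Finset.mem_range.mp hi; omega), smul_zero]

lemma circuit_int {n m : ℕ} (hn : 0 < n) {K : Set (Fin n → ℝ)} (hK : IsProperCone K)
    {A : Matrix (Fin n) (Fin n) ℝ} (hA : KPrimitive K A) {y : Fin m → Fin n → ℝ}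
    (hy : ∀ i, y i ∈ K) (hy0 : ∀ i, y i ≠ 0) {i : Fin m} {l : ℕ} (hl : 0 < l)
    (h : Rch K A y l i i) : (A ^ ((n - 1) * l)) *ᵥ y i ∈ interior K := by
  rw [pc_int_iff hK (kn_pow hA.1 _ _ (hy i))]
  intro f hf0 hf hz
  have hdown : ∀ d ≤ n - 1, f ((A ^ ((n - 1 - d) * l)) *ᵥ y i) = 0 := by
    intro d
    induction d with
    | zero => intro _; simpa using hz
    | succ d ih =>
      intro hd
      have h1 := ih (by omega)
      rw [show (n - 1 - d) * l = (n - 1 - (d + 1)) * l + l by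
        rw [show n - 1 - d = n - 1 - (d + 1) + 1 by omega]; ring, pow_add,
        ← Matrix.mulVec_mulVec] at h1
      exact h (f ∘ₗ (A ^ ((n - 1 - (d + 1)) * l)).mulVecLin) (comp_nonneg hA.1 hf _) h1
  have hall := ch_kill hn (A ^ l) (y i) f (by
    intro k hk
    have := hdown (n - 1 - k) (by omega)
    rw [← pow_mul, mul_comm]
    rwa [show n - 1 - (n - 1 - k) = k by omega] at this)
  obtain ⟨k, hk, hpos⟩ := hA.2
  have h1 := kp_int hn hK hA (hpos _ (hy i) (hy0 i)) (l * k - k)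
  have hle : k ≤ l * k := Nat.le_mul_of_pos_left k hl
  rw [Matrix.mulVec_mulVec, ← pow_add, Nat.sub_add_cancel hle, pow_mul] at h1
  exact (pc_pos hf0 hf h1).ne' (hall k)

lemma path_int {n m : ℕ} (hn : 0 < n) {K : Set (Fin n → ℝ)} (hK : IsProperCone K)
    {A : Matrix (Fin n) (Fin n) ℝ} (hA : KPrimitive K A) {y : Fin m → Fin n → ℝ}
    (hy : ∀ i, y i ∈ K) (hy0 : ∀ i, y i ≠ 0) {i j : Fin m} {t l : ℕ} (hl : 0 < l)
    (ht : Rch K A y t i j) (h : Rch K A y l j j) :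
    (A ^ (t + (n - 1) * l)) *ᵥ y i ∈ interior K := by
  rw [pc_int_iff hK (kn_pow hA.1 _ _ (hy i))]
  intro f hf0 hf hz
  rw [add_comm, pow_add, ← Matrix.mulVec_mulVec] at hz
  have := ht (f ∘ₗ (A ^ ((n - 1) * l)).mulVecLin) (comp_nonneg hA.1 hf _) hz
  exact (pc_pos hf0 hf (circuit_int hn hK hA hy hy0 hl h)).ne' this

/-- pigeonhole on orbits -/
lemma orbit_repeat {m : ℕ} (σ : Fin m → Fin m) (i : Fin m) :
    ∃ a b, a < b ∧ b ≤ m ∧ σ^[a] i = σ^[b] i := by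
  have : ¬ Function.Injective (fun a : Fin (m + 1) => σ^[(a : ℕ)] i) := by
    intro h
    have := Fintype.card_le_of_injective _ h
    simp at this
  rw [Function.not_injective_iff] at this
  obtain ⟨a, b, hab, hne⟩ := this
  rcases lt_or_gt_of_ne hne with h | h
  · exact ⟨a, b, h, by have := b.2; omega, hab⟩
  · exact ⟨b, a, h, by have := a.2; omega, hab.symm⟩

lemma comb_main {n m : ℕ} (hn : 0 < n) {K : Set (Fin n → ℝ)} (hK : IsProperCone K)
    {A : Matrix (Fin n) (Fin n) ℝ} (hA : KPrimitive K A) {y : Fin m → Fin n → ℝ}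
    (hgen : K = ConeGen y) (hy0 : ∀ i, y i ≠ 0) :
    (∀ i, y i ∈ interior K) ∨
    (∀ i, ∃ t l j, 0 < l ∧ l ≤ m - 1 ∧ t + l ≤ m ∧ Rch K A y t i j ∧ Rch K A y l j j) := by
  classical
  have hy : ∀ i, y i ∈ K := fun i => hgen ▸ coneGen_mem y i
  obtain ⟨k, hk, hpos⟩ := hA.2
  -- out-edges
  have hedge : ∀ i, ∃ c : Fin m → ℝ, (∀ j, 0 ≤ c j) ∧ A *ᵥ y i = ∑ j, c j • y j ∧
      (∀ j, 0 < c j → Rch K A y 1 i j) ∧ ∃ j, 0 < c j := by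
    intro i
    have h1 := hA.1 _ (hy i)
    have hne := kp_ne_zero hn hK hk hpos (hy i) (hy0 i)
    rw [hgen] at h1
    obtain ⟨c, hc, hs⟩ := h1
    refine ⟨c, hc, hs, ?_, ?_⟩
    · intro j hj f hf h0
      rw [pow_one, hs, map_sum] at h0
      have := (Finset.sum_eq_zero_iff_of_nonneg (fun l _ => by
        rw [map_smul]; exact mul_nonneg (hc l) (hf _ (hy l)))).mp h0 j (Finset.mem_univ j)
      rw [map_smul, smul_eq_mul] at this
      exact (mul_eq_zero.mp this).resolve_left hj.ne'
    · by_contra hcon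
      push Not at hcon
      apply hne
      rw [hs]
      exact Finset.sum_eq_zero fun j _ => by rw [le_antisymm (hcon j) (hc j), zero_smul]
  choose c hc hs hcR hex using hedge
  choose σ hσ using hex
  have hσR : ∀ i, Rch K A y 1 i (σ i) := fun i => hcR i _ (hσ i)
  by_cases hall : ∀ i, ∃ t l j, 0 < l ∧ l ≤ m - 1 ∧ t + l ≤ m ∧ Rch K A y t i j ∧ Rch K A y l j j
  · exact Or.inr hall
  push Not at hall
  obtain ⟨i₀, hi₀⟩ := hall
  have hrep : ∀ a b, a < b → b ≤ m → σ^[a] i₀ = σ^[b] i₀ → a = 0 ∧ b = m := by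
    intro a b hab hb he
    by_contra hcon
    have hl : b - a ≤ m - 1 := by omega
    apply hi₀ a (b - a) (σ^[a] i₀) (by omega) hl (by omega) (Rch.iter hA.1 hσR a i₀)
    have := Rch.iter hA.1 hσR (b - a) (σ^[a] i₀)
    rwa [← Function.iterate_add_apply, Nat.sub_add_cancel hab.le, ← he] at this
  have hper : σ^[m] i₀ = i₀ := by
    obtain ⟨a, b, hab, hb, he⟩ := orbit_repeat σ i₀
    obtain ⟨rfl, rfl⟩ := hrep a b hab hb he
    exact he.symm
  have hm : 0 < m := lt_of_le_of_lt (Nat.zero_le _) i₀.2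
  have hsurj : ∀ i, ∃ a < m, i = σ^[a] i₀ := by
    have hinj : Function.Injective (fun a : Fin m => σ^[(a : ℕ)] i₀) := by
      intro a b hab
      by_contra hne
      rcases lt_or_gt_of_ne hne with h | h
      · have := hrep a b h b.2.le hab
        have := b.2
        omega
      · have := hrep b a h a.2.le hab.symm
        have := a.2
        omega
    intro i
    obtain ⟨a, ha⟩ := Finite.surjective_of_injective hinj i
    exact ⟨a, a.2, ha.symm⟩
  have hperj : ∀ j, σ^[m] j = j := by
    intro j
    obtain ⟨a, _, rfl⟩ := hsurj j
    rw [← Function.iterate_add_apply, add_comm, Function.iterate_add_apply, hper]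
  -- from every j every i is reached in between 1 and m steps
  have hreach : ∀ j i, ∃ a, 1 ≤ a ∧ a ≤ m ∧ i = σ^[a] j := by
    intro j i
    obtain ⟨a, ha, rfl⟩ := hsurj j
    obtain ⟨b, hb, rfl⟩ := hsurj i
    by_cases hab : a < b
    · refine ⟨b - a, by omega, by omega, ?_⟩
      rw [← Function.iterate_add_apply, Nat.sub_add_cancel hab.le]
    · refine ⟨b + m - a, by omega, by omega, ?_⟩
      rw [← Function.iterate_add_apply, Nat.sub_add_cancel (by omega), Function.iterate_add_apply,
        hper]
  by_cases hchord : ∃ j q, Rch K A y 1 j q ∧ q ≠ σ j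
  · right
    obtain ⟨j, q, hjq, hqne⟩ := hchord
    obtain ⟨b, hb1, hbm, rfl⟩ := hreach j q
    have hb2 : 2 ≤ b := by
      by_contra hcon
      have : b = 1 := by omega
      subst this
      exact hqne rfl
    intro i
    obtain ⟨a, ha1, ham, rfl⟩ := hreach j i
    have hback : ∀ a, a ≤ m → Rch K A y (m - a) (σ^[a] j) j := by
      intro a ham
      have := Rch.iter hA.1 hσR (m - a) (σ^[a] j)
      rwa [← Function.iterate_add_apply, Nat.sub_add_cancel ham, hperj] at this
    have hfwd : ∀ a b, a ≤ b → Rch K A y (b - a) (σ^[a] j) (σ^[b] j) := by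
      intro a b hab
      have := Rch.iter hA.1 hσR (b - a) (σ^[a] j)
      rwa [← Function.iterate_add_apply, Nat.sub_add_cancel hab] at this
    by_cases hab : a < b
    · refine ⟨b - a, m - b + 1, σ^[b] j, by omega, by omega, by omega, hfwd a b hab.le, ?_⟩
      exact (hback b hbm).trans hA.1 hjq
    · refine ⟨0, m - b + 1, σ^[a] j, by omega, by omega, by omega, Rch.refl _, ?_⟩
      have h3 := ((hback a ham).trans hA.1 hjq).trans hA.1 (hfwd b a (by omega))
      convert h3 using 1
      omega
  · left
    push Not at hchord
    have hone : ∀ j, A *ᵥ y j = c j (σ j) • y (σ j) := by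
      intro j
      rw [hs j]
      apply Finset.sum_eq_single (σ j)
      · intro q _ hq
        have : ¬ 0 < c j q := fun h => hq (hchord j q (hcR j q h))
        rw [le_antisymm (not_lt.mp this) (hc j q), zero_smul]
      · simp
    have hpow : ∀ t j, ∃ r : ℝ, 0 < r ∧ (A ^ t) *ᵥ y j = r • y (σ^[t] j) := by
      intro t j
      induction t with
      | zero => exact ⟨1, one_pos, by simp⟩
      | succ t ih =>
        obtain ⟨r, hr, he⟩ := ih
        refine ⟨r * c (σ^[t] j) (σ (σ^[t] j)), mul_pos hr (hσ _), ?_⟩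
        rw [pow_succ', ← Matrix.mulVec_mulVec, he, Matrix.mulVec_smul, hone, smul_smul,
          Function.iterate_succ_apply']
    intro i
    -- choose a preimage under σ^[k]
    have hk' : σ^[k] (σ^[m * k - k] i) = i := by
      rw [← Function.iterate_add_apply, Nat.add_sub_cancel' (Nat.le_mul_of_pos_left k hm),
        Function.iterate_mul]
      exact Function.iterate_fixed (hperj i) k
    obtain ⟨r, hr, he⟩ := hpow k (σ^[m * k - k] i)
    have h1 := hpos _ (hy (σ^[m * k - k] i)) (hy0 _)
    rw [he, hk'] at h1
    rw [pc_int_iff hK (hy i)]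
    intro f hf0 hf hz
    have := pc_pos hf0 hf h1
    rw [map_smul, hz, smul_zero] at this
    exact lt_irrefl _ this

lemma upper_pos {n : ℕ} (hn : 2 ≤ n) {K : Set (Fin n → ℝ)} (hK : IsPolyhedralCone K)
    {A : Matrix (Fin n) (Fin n) ℝ} (hA : KPrimitive K A) :
    KPositive K (A ^ ((n - 1) * ((ExtremeRays K).ncard - 1) + 1)) := by
  obtain ⟨m, y, hgen, hy0, hcard, -⟩ := poly_min hK
  rw [hcard]
  have hn0 : 0 < n := by omega
  have hy : ∀ i, y i ∈ K := fun i => hgen ▸ coneGen_mem y i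
  have hyint : ∀ i, (A ^ ((n - 1) * (m - 1) + 1)) *ᵥ y i ∈ interior K := by
    rcases comb_main hn0 hK.1 hA hgen hy0 with h | h
    · intro i
      exact kp_int hn0 hK.1 hA (h i) _
    · intro i
      obtain ⟨t, l, j, hl, hlm, htl, h1, h2⟩ := h i
      have h3 := path_int hn0 hK.1 hA hy hy0 hl h1 h2
      have hle : t + (n - 1) * l ≤ (n - 1) * (m - 1) + 1 := by
        obtain ⟨p, rfl⟩ : ∃ p, n = p + 2 := ⟨n - 2, by omega⟩
        obtain ⟨q, rfl⟩ : ∃ q, m = q + 1 := ⟨m - 1, by omega⟩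
        simp only [Nat.add_sub_cancel, show p + 2 - 1 = p + 1 by omega] at *
        nlinarith [Nat.mul_le_mul_left p hlm]
      have h4 := kp_int hn0 hK.1 hA h3 ((n - 1) * (m - 1) + 1 - (t + (n - 1) * l))
      rwa [Matrix.mulVec_mulVec, ← pow_add, Nat.sub_add_cancel hle] at h4
  intro x hx hx0
  rw [pc_int_iff hK.1 (kn_pow hA.1 _ _ hx)]
  intro f hf0 hf hz
  have hx' := hx
  rw [hgen] at hx'
  obtain ⟨c, hc, rfl⟩ := hx'
  apply hx0
  apply Finset.sum_eq_zero
  intro i _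
  rw [Matrix.mulVec_sum, map_sum] at hz
  have := (Finset.sum_eq_zero_iff_of_nonneg (fun l _ => by
    rw [Matrix.mulVec_smul, map_smul]
    exact mul_nonneg (hc l) (pc_pos hf0 hf (hyint l)).le)).mp hz i (Finset.mem_univ i)
  rw [Matrix.mulVec_smul, map_smul, smul_eq_mul] at this
  rw [(mul_eq_zero.mp this).resolve_right (pc_pos hf0 hf (hyint i)).ne', zero_smul]

lemma upper_bound {n : ℕ} (hn : 2 ≤ n) {K : Set (Fin n → ℝ)} (hK : IsPolyhedralCone K)
    {A : Matrix (Fin n) (Fin n) ℝ} (hA : KPrimitive K A) :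
    expnt K A ≤ (n - 1) * ((ExtremeRays K).ncard - 1) + 1 :=
  Nat.sInf_le ⟨Nat.succ_pos _, upper_pos hn hK hA⟩

lemma expnt_lower {n : ℕ} (hn : 0 < n) {K : Set (Fin n → ℝ)} (hK : IsProperCone K)
    {A : Matrix (Fin n) (Fin n) ℝ} (hA : KPrimitive K A) {N : ℕ}
    (hN : ¬ KPositive K (A ^ N)) : N + 1 ≤ expnt K A := by
  have hmem : expnt K A ∈ {k : ℕ | 0 < k ∧ KPositive K (A ^ k)} := Nat.sInf_mem hA.2
  obtain ⟨h1, h2⟩ := hmem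
  by_contra hcon
  apply hN
  intro x hx hx0
  have h3 := kp_int hn hK hA (h2 x hx hx0) (N - expnt K A)
  rwa [Matrix.mulVec_mulVec, ← pow_add, Nat.sub_add_cancel (by omega)] at h3

/-! ### The abstract construction -/

lemma wie_iff {n m : ℕ} (hm : 2 ≤ m) {A : Matrix (Fin n) (Fin n) ℝ} {x : Fin n → ℝ} {c : ℝ}
    (hc0 : 0 < c) (hc1 : c < 1)
    (hrec : (A ^ m) *ᵥ x = c • (A *ᵥ x) + (1 - c) • x)
    (f : (Fin n → ℝ) →ₗ[ℝ] ℝ) (hf : ∀ j : ℕ, 0 ≤ f ((A ^ j) *ᵥ x)) (k : ℕ) :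
    ∀ r, k ≤ r → (f ((A ^ ((m - 1) * k + r)) *ᵥ x) = 0 ↔
      ∀ i ≤ k, f ((A ^ (r - i)) *ᵥ x) = 0) := by
  induction k with
  | zero =>
    intro r _
    constructor
    · intro h i hi
      obtain rfl : i = 0 := by omega
      simpa using h
    · intro h
      simpa using h 0 le_rfl
  | succ k ih =>
    intro r hr
    obtain ⟨s, rfl⟩ : ∃ s, r = s + 1 := ⟨r - 1, by omega⟩
    have hstep : (A ^ ((m - 1) * (k + 1) + (s + 1))) *ᵥ x =
        c • ((A ^ ((m - 1) * k + (s + 1))) *ᵥ x) + (1 - c) • ((A ^ ((m - 1) * k + s)) *ᵥ x) := by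
      have h1 : (m - 1) * (k + 1) + (s + 1) = ((m - 1) * k + s) + m := by
        obtain ⟨q, rfl⟩ : ∃ q, m = q + 1 := ⟨m - 1, by omega⟩
        simp only [Nat.add_sub_cancel]
        ring
      rw [h1, pow_add, ← Matrix.mulVec_mulVec, hrec, Matrix.mulVec_add, Matrix.mulVec_smul,
        Matrix.mulVec_smul, Matrix.mulVec_mulVec, ← pow_succ, add_assoc]
    rw [hstep, map_add, map_smul, map_smul, smul_eq_mul, smul_eq_mul]
    have hc1' : 0 < 1 - c := by linarith
    rw [add_eq_zero_iff_of_nonneg (mul_nonneg hc0.le (hf _)) (mul_nonneg hc1'.le (hf _)),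
      mul_eq_zero_iff_left hc0.ne', mul_eq_zero_iff_left hc1'.ne', ih s (by omega),
      ih (s + 1) (by omega)]
    constructor
    · rintro ⟨h1, h2⟩ i hi
      rcases Nat.lt_or_ge i (k + 1) with h | h
      · exact h1 i (by omega)
      · have := h2 k le_rfl
        rwa [show s + 1 - i = s - k by omega]
    · intro h
      refine ⟨fun i hi => h i (by omega), fun i hi => ?_⟩
      have := h (i + 1) (by omega)
      rwa [show s + 1 - (i + 1) = s - i by omega] at this

lemma closed_gen {n m : ℕ} (y : Fin m → Fin n → ℝ) (e : (Fin n → ℝ) →ₗ[ℝ] ℝ)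
    (he : ∀ j, e (y j) = 1) (hm : 0 < m) : IsClosed (ConeGen y) := by
  have hcont : Continuous e := LinearMap.continuous_of_finiteDimensional e
  have hcl : IsClosed {p : stdSimplex ℝ (Fin m) × (Fin n → ℝ) |
      0 ≤ e p.2 ∧ p.2 = e p.2 • ∑ j, (p.1 : Fin m → ℝ) j • y j} := by
    apply IsClosed.inter
    · exact isClosed_le continuous_const (hcont.comp continuous_snd)
    · apply isClosed_eq continuous_snd
      apply Continuous.smul (hcont.comp continuous_snd)
      refine continuous_finsetSum _ fun j _ => ?_
      exact Continuous.smul ((continuous_apply j).comp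
        (continuous_subtype_val.comp continuous_fst)) continuous_const
  have := isClosedMap_snd_of_compactSpace _ hcl
  convert this using 1
  ext x
  constructor
  · rintro ⟨c, hc, rfl⟩
    have hes : e (∑ j, c j • y j) = ∑ j, c j := by simp [he]
    have hs0 : 0 ≤ ∑ j, c j := Finset.sum_nonneg fun j _ => hc j
    rcases hs0.lt_or_eq with h | h
    · refine ⟨(⟨fun j => c j / ∑ j, c j, fun j => div_nonneg (hc j) hs0, ?_⟩,
        ∑ j, c j • y j), ⟨?_, ?_⟩, rfl⟩
      · rw [← Finset.sum_div, div_self h.ne']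
      · simp only [hes]; exact hs0
      · simp only [hes]
        rw [Finset.smul_sum]
        apply Finset.sum_congr rfl
        intro j _
        rw [smul_smul]
        congr 1
        change c j = (∑ j, c j) * (c j / ∑ j, c j)
        rw [mul_div_cancel₀ _ h.ne']
    · have hz : ∀ j, c j = 0 := fun j =>
        (Finset.sum_eq_zero_iff_of_nonneg (fun j _ => hc j)).mp h.symm j (Finset.mem_univ j)
      refine ⟨(⟨Pi.single ⟨0, hm⟩ 1, single_mem_stdSimplex ℝ _⟩, ∑ j, c j • y j), ⟨?_, ?_⟩, rfl⟩
      · simp only [hes]; exact hs0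
      · simp only [hes, ← h, zero_smul]
        simp [hz]
  · rintro ⟨⟨c, x'⟩, ⟨h1, h2⟩, rfl⟩
    refine ⟨fun j => e x' * (c : Fin m → ℝ) j, fun j => mul_nonneg h1 (c.2.1 j), ?_⟩
    simp only at h2 ⊢
    nth_rewrite 1 [h2]
    rw [Finset.smul_sum]
    simp [smul_smul]

lemma construct {m n T : ℕ} (hn : 3 ≤ n) (hT : T + n ≤ m) (hTm : m ≤ T + n + 1)
    {A : Matrix (Fin n) (Fin n) ℝ} {x : Fin n → ℝ} {c : ℝ}
    (hc0 : 0 < c) (hc1 : c < 1)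
    (hrec : (A ^ m) *ᵥ x = c • (A *ᵥ x) + (1 - c) • x)
    (e : (Fin n → ℝ) →ₗ[ℝ] ℝ) (he : ∀ j : ℕ, e ((A ^ j) *ᵥ x) = 1)
    (hspan : ∀ g : (Fin n → ℝ) →ₗ[ℝ] ℝ, (∀ j : ℕ, g ((A ^ j) *ᵥ x) = 0) → g = 0)
    (f : (Fin n → ℝ) →ₗ[ℝ] ℝ) (hf0 : f ≠ 0) (hf : ∀ j < m, 0 ≤ f ((A ^ j) *ᵥ x))
    (hfz : ∀ j, T < j → j < T + n → f ((A ^ j) *ᵥ x) = 0) :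
    ∃ K : Set (Fin n → ℝ), MemP m K ∧ KPrimitive K A ∧
      (n - 2) * (m - 1) + T + n ≤ expnt K A := by
  set y : Fin m → Fin n → ℝ := fun j => (A ^ (j : ℕ)) *ᵥ x with hydef
  have hm : 2 ≤ m := by omega
  have hn0 : 0 < n := by omega
  have hc1' : 0 < 1 - c := by linarith
  have hrec' : ∀ j : ℕ, (A ^ (j + m)) *ᵥ x =
      c • ((A ^ (j + 1)) *ᵥ x) + (1 - c) • ((A ^ j) *ᵥ x) := by
    intro j
    rw [pow_add, ← Matrix.mulVec_mulVec, hrec, Matrix.mulVec_add, Matrix.mulVec_smul,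
      Matrix.mulVec_smul, Matrix.mulVec_mulVec, ← pow_succ]
  have hall : ∀ j : ℕ, (A ^ j) *ᵥ x ∈ ConeGen y := by
    intro j
    induction j using Nat.strong_induction_on with
    | _ j ih =>
      by_cases hj : j < m
      · exact coneGen_mem y ⟨j, hj⟩
      · obtain ⟨i, rfl⟩ : ∃ i, j = i + m := ⟨j - m, by omega⟩
        rw [hrec']
        exact coneGen_add y (coneGen_smul y hc0.le (ih _ (by omega)))
          (coneGen_smul y hc1'.le (ih _ (by omega)))
  have hdualpos : ∀ g : (Fin n → ℝ) →ₗ[ℝ] ℝ, (∀ j : Fin m, 0 ≤ g (y j)) →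
      ∀ z ∈ ConeGen y, 0 ≤ g z := by
    rintro g hg z ⟨d, hd, rfl⟩
    rw [map_sum]
    exact Finset.sum_nonneg fun j _ => by
      rw [map_smul]; exact mul_nonneg (hd j) (hg j)
  have hfwd : ∀ g : (Fin n → ℝ) →ₗ[ℝ] ℝ, (∀ j < m, g ((A ^ j) *ᵥ x) = 0) → g = 0 := by
    intro g hg
    apply hspan
    intro j
    induction j using Nat.strong_induction_on with
    | _ j ih =>
      by_cases hj : j < m
      · exact hg j hj
      · obtain ⟨i, rfl⟩ : ∃ i, j = i + m := ⟨j - m, by omega⟩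
        rw [hrec', map_add, map_smul, map_smul, ih _ (by omega), ih _ (by omega)]
        simp
  -- properness
  have hproper : IsProperCone (ConeGen y) := by
    refine ⟨closed_gen y e (fun j => he j) (by omega), fun a ha b hb => coneGen_add y ha hb,
      fun r hr a ha => coneGen_smul y hr ha, ?_, ?_⟩
    · apply Set.Subset.antisymm
      · rintro z ⟨hz1, hz2⟩
        have hepos := hdualpos e (fun j => by rw [he j]; exact zero_le_one)
        have h1 := hepos _ hz1
        have h2 := hepos _ hz2
        rw [map_neg] at h2
        obtain ⟨d, hd, rfl⟩ := hz1
        have h3 : e (∑ j, d j • y j) = ∑ j, d j := by simp [hydef, he]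
        have h4 : ∑ j, d j = 0 := by linarith
        have h5 := (Finset.sum_eq_zero_iff_of_nonneg (fun j _ => hd j)).mp h4
        exact Finset.sum_eq_zero fun j hj => by rw [h5 j hj, zero_smul]
      · rintro z rfl
        exact ⟨coneGen_zero y, by rw [Set.mem_neg, neg_zero]; exact coneGen_zero y⟩
    · let Lm : (Fin m → ℝ) →ₗ[ℝ] (Fin n → ℝ) := Fintype.linearCombination ℝ y
      have hLm : ∀ d, Lm d = ∑ j, d j • y j := fun d => Fintype.linearCombination_apply ℝ y d
      have hsurj : Function.Surjective Lm := by
        rw [← LinearMap.range_eq_top]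
        by_contra hne
        obtain ⟨g, hg0, hg⟩ := Submodule.exists_le_ker_of_lt_top _ (lt_top_iff_ne_top.mpr hne)
        apply hg0
        apply hfwd
        intro j hj
        have : y ⟨j, hj⟩ ∈ LinearMap.range Lm := by
          refine ⟨Pi.single ⟨j, hj⟩ 1, ?_⟩
          simp [Lm]
        exact hg this
      have hopen := LinearMap.isOpenMap_of_finiteDimensional Lm hsurj
      have hU : IsOpen (Set.univ.pi fun _ : Fin m => Set.Ioi (0 : ℝ)) :=
        isOpen_set_pi Set.finite_univ fun _ _ => isOpen_Ioi
      refine ⟨Lm 1, mem_interior.mpr ⟨_, ?_, hopen _ hU, ⟨1, ?_, rfl⟩⟩⟩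
      · rintro _ ⟨d, hd, rfl⟩
        exact ⟨d, fun j => (hd j (Set.mem_univ j)).le, hLm d⟩
      · intro j _
        exact zero_lt_one' ℝ
  have hpoly : IsPolyhedralCone (ConeGen y) := ⟨hproper, m, y, rfl⟩
  have hKn : KNonneg (ConeGen y) A := by
    rintro z ⟨d, hd, rfl⟩
    rw [Matrix.mulVec_sum]
    refine coneGen_sum y _ _ fun j _ => ?_
    rw [Matrix.mulVec_smul]
    refine coneGen_smul y (hd j) ?_
    rw [hydef]
    simp only
    rw [Matrix.mulVec_mulVec, ← pow_succ']
    exact hall _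
  have hyint : ∀ i : Fin m, (A ^ ((m - 1) * (m - 1) + (m - 1))) *ᵥ y i ∈ interior (ConeGen y) := by
    intro i
    rw [pc_int_iff hproper (kn_pow hKn _ _ (coneGen_mem y i))]
    intro g hg0 hg hz
    apply hg0
    rw [hydef] at hz
    simp only at hz
    rw [Matrix.mulVec_mulVec, ← pow_add, add_assoc,
      wie_iff hm hc0 hc1 hrec g (fun j => hg _ (hall j)) (m - 1) _ (by omega)] at hz
    -- vanishing on a window of length m, move down
    have hwin : ∀ d ≤ (i : ℕ), ∀ j, (i : ℕ) - d ≤ j → j < i - d + m → g ((A ^ j) *ᵥ x) = 0 := by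
      intro d
      induction d with
      | zero =>
        intro _ j h1 h2
        have := hz (m - 1 + i - j) (by omega)
        rwa [show m - 1 + (i : ℕ) - (m - 1 + i - j) = j by omega] at this
      | succ d ih =>
        intro hd j h1 h2
        by_cases hj : (i : ℕ) - d ≤ j
        · exact ih (by omega) j hj (by omega)
        · have h3 := congrArg g (hrec' j)
          rw [map_add, map_smul, map_smul, ih (by omega) (j + m) (by omega) (by omega),
            ih (by omega) (j + 1) (by omega) (by omega), smul_zero, zero_add, smul_eq_mul] at h3
          exact (mul_eq_zero.mp h3.symm).resolve_left hc1'.ne'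
    apply hfwd
    intro j hj
    exact hwin i le_rfl j (by omega) (by omega)
  have hprim : KPrimitive (ConeGen y) A := by
    refine ⟨hKn, (m - 1) * (m - 1) + (m - 1), by
      have : 0 < m - 1 := by omega
      omega, ?_⟩
    intro z hz hz0
    rw [pc_int_iff hproper (kn_pow hKn _ _ hz)]
    intro g hg0 hg hgz
    obtain ⟨d, hd, rfl⟩ := hz
    apply hz0
    apply Finset.sum_eq_zero
    intro i _
    rw [Matrix.mulVec_sum, map_sum] at hgz
    have := (Finset.sum_eq_zero_iff_of_nonneg (fun l _ => by
      rw [Matrix.mulVec_smul, map_smul]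
      exact mul_nonneg (hd l) (pc_pos hg0 hg (hyint l)).le)).mp hgz i (Finset.mem_univ i)
    rw [Matrix.mulVec_smul, map_smul, smul_eq_mul] at this
    rw [(mul_eq_zero.mp this).resolve_right (pc_pos hg0 hg (hyint i)).ne', zero_smul]
  have hlow : (n - 2) * (m - 1) + T + n ≤ expnt (ConeGen y) A := by
    have hfK := hdualpos f (fun j => hf j j.2)
    have hnot : ¬ KPositive (ConeGen y) (A ^ ((m - 1) * (n - 2) + (T + n - 1))) := by
      intro hpos
      have hx0 : x ≠ 0 := by
        intro h
        have := he 0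
        rw [h] at this
        simp at this
      have hxK : x ∈ ConeGen y := by simpa using hall 0
      have h1 := pc_pos hf0 hfK (hpos x hxK hx0)
      apply h1.ne'
      rw [wie_iff hm hc0 hc1 hrec f (fun j => hfK _ (hall j)) (n - 2) _ (by omega)]
      intro i hi
      exact hfz _ (by omega) (by omega)
    have := expnt_lower hn0 hproper hprim hnot
    rw [mul_comm (n - 2)]
    omega
  refine ⟨ConeGen y, ⟨hpoly, ?_⟩, hprim, hlow⟩
  obtain ⟨m', y', hgen, -, hcard, hmin⟩ := poly_min hpoly
  have hup := upper_bound (by omega) hpoly hprim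
  rw [hcard] at hup ⊢
  have hle := hmin m y rfl
  by_contra hne
  have hlt : m' - 1 + 1 ≤ m - 1 := by omega
  obtain ⟨p, rfl⟩ : ∃ p, n = p + 3 := ⟨n - 3, by omega⟩
  simp only [show p + 3 - 2 = p + 1 by omega, show p + 3 - 1 = p + 2 by omega] at *
  have h5 := Nat.mul_le_mul_left (p + 2) hlt
  have h6 : (p + 2) * (m' - 1 + 1) = (p + 2) * (m' - 1) + (p + 2) := by ring
  have h7 : (p + 2) * (m - 1) = (p + 1) * (m - 1) + (m - 1) := by ring
  omega

section Companion
open Polynomial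

lemma comp_exists {n : ℕ} (hn : 3 ≤ n) (p : ℝ[X]) (hp : p.Monic) (hd : p.natDegree = n) :
    ∃ (A : Matrix (Fin n) (Fin n) ℝ) (x : Fin n → ℝ),
      (∀ s (hs : s < n), (A ^ s) *ᵥ x = Pi.single ⟨s, hs⟩ 1) ∧
      (∀ q : ℝ[X], p ∣ q → (aeval A q) *ᵥ x = 0) ∧
      (∀ s, (A ^ (s + n)) *ᵥ x + ∑ i ∈ Finset.range n, p.coeff i • ((A ^ (s + i)) *ᵥ x) = 0) := by
  let A : Matrix (Fin n) (Fin n) ℝ := fun i j =>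
    if (j : ℕ) + 1 < n then (if (i : ℕ) = j + 1 then 1 else 0) else - p.coeff i
  let x : Fin n → ℝ := Pi.single ⟨0, by omega⟩ 1
  have h1 : ∀ s (hs : s < n), (A ^ s) *ᵥ x = Pi.single ⟨s, hs⟩ 1 := by
    intro s
    induction s with
    | zero => intro hs; rw [pow_zero, Matrix.one_mulVec]
    | succ s ih =>
      intro hs
      rw [pow_succ', ← Matrix.mulVec_mulVec, ih (by omega), Matrix.mulVec_single_one]
      ext i
      change A i ⟨s, _⟩ = _
      simp only [A, hs, if_true, Pi.single_apply, Fin.ext_iff]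
  have h2 : (A ^ n) *ᵥ x = ∑ i ∈ Finset.range n, (- p.coeff i) • ((A ^ i) *ᵥ x) := by
    obtain ⟨k, rfl⟩ : ∃ k, n = k + 1 := ⟨n - 1, by omega⟩
    rw [pow_succ', ← Matrix.mulVec_mulVec, h1 k (by omega), Matrix.mulVec_single_one]
    rw [Finset.sum_range]
    ext i
    change A i ⟨k, _⟩ = _
    simp only [Finset.sum_apply, Pi.smul_apply]
    rw [Finset.sum_eq_single i]
    · rw [h1 i i.2]; simp [A]
    · intro b _ hb
      rw [h1 b b.2]; simp [Pi.single_apply, hb.symm]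
    · simp
  have h3 : (aeval A p) *ᵥ x = 0 := by
    rw [aeval_eq_sum_range, hd, Finset.sum_range_succ, Matrix.add_mulVec, Matrix.sum_mulVec]
    have : p.coeff n = 1 := by rw [← hd]; exact hp
    rw [this, one_smul, h2, ← Finset.sum_add_distrib]
    apply Finset.sum_eq_zero
    intro i _
    rw [Matrix.smul_mulVec, neg_smul, add_neg_cancel]
  refine ⟨A, x, h1, ?_, ?_⟩
  · rintro q ⟨r, rfl⟩
    rw [mul_comm, map_mul, ← Matrix.mulVec_mulVec, h3, Matrix.mulVec_zero]
  · intro s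
    rw [pow_add, ← Matrix.mulVec_mulVec, h2, Matrix.mulVec_sum, ← Finset.sum_add_distrib]
    apply Finset.sum_eq_zero
    intro i _
    rw [pow_add, ← Matrix.mulVec_mulVec, Matrix.mulVec_smul, neg_smul, neg_add_cancel]

lemma good_construct {m n T : ℕ} (hn : 3 ≤ n) (hT : T + n ≤ m) (hTm : m ≤ T + n + 1)
    {c : ℝ} (hc0 : 0 < c) (hc1 : c < 1) (p : ℝ[X]) (hp : p.Monic) (hd : p.natDegree = n)
    (hdvd : p ∣ X ^ m - C c * X - C (1 - c)) (h1 : p.eval 1 = 0) (u : PowerSeries ℝ)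
    (hu : (p : PowerSeries ℝ) * u = 1) (hpos : ∀ j ≤ T, 0 ≤ - PowerSeries.coeff j u) :
    ∃ (K : Set (Fin n → ℝ)) (A : Matrix (Fin n) (Fin n) ℝ), MemP m K ∧ KPrimitive K A ∧
      (n - 2) * (m - 1) + T + n ≤ expnt K A := by
  obtain ⟨A, x, hA1, hA2, hA3⟩ := comp_exists hn p hp hd
  have hpn : p.coeff n = 1 := by rw [← hd]; exact hp
  have hsum1 : 1 + ∑ i ∈ Finset.range n, p.coeff i = 0 := by
    rw [eval_eq_sum_range, hd, Finset.sum_range_succ, hpn] at h1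
    simp only [one_pow, mul_one] at h1
    linarith
  have hrec : (A ^ m) *ᵥ x = c • (A *ᵥ x) + (1 - c) • x := by
    have := hA2 _ hdvd
    simp only [map_sub, map_mul, map_pow, aeval_X, aeval_C, Matrix.sub_mulVec] at this
    simp only [Algebra.algebraMap_eq_smul_one, sub_smul, one_smul, Matrix.sub_mulVec, smul_mul_assoc,
      one_mul, Matrix.smul_mulVec, Matrix.one_mulVec] at this
    rw [sub_smul, one_smul]
    have h := sub_eq_zero.1 this
    rw [sub_eq_iff_eq_add] at h
    rw [h]; abel
  let F : (ℕ → ℝ) → ((Fin n → ℝ) →ₗ[ℝ] ℝ) := fun v => ∑ i : Fin n, v i • LinearMap.proj i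
  have hF : ∀ v s, s < n → F v ((A ^ s) *ᵥ x) = v s := by
    intro v s hs
    rw [hA1 s hs]
    simp [F, Pi.single_apply]
  have hFrec : ∀ (g : (Fin n → ℝ) →ₗ[ℝ] ℝ) s, g ((A ^ (s + n)) *ᵥ x) =
      - ∑ i ∈ Finset.range n, p.coeff i * g ((A ^ (s + i)) *ᵥ x) := by
    intro g s
    have := congrArg g (hA3 s)
    simp only [map_add, map_sum, map_smul, smul_eq_mul, map_zero] at this
    linarith
  let v : ℕ → ℝ := fun s => if s ≤ T then - PowerSeries.coeff (T - s) u else 0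
  have hvrec : ∀ s, s < T → v (s + n) = - ∑ i ∈ Finset.range n, p.coeff i * v (s + i) := by
    intro s hs
    have h := congrArg (PowerSeries.coeff (T - s)) hu
    rw [PowerSeries.coeff_mul, PowerSeries.coeff_one, if_neg (by omega)] at h
    have h2 : ∑ i ∈ Finset.range (n + 1), p.coeff i * v (s + i) = 0 := by
      rw [Finset.Nat.sum_antidiagonal_eq_sum_range_succ_mk] at h
      have e1 : ∑ i ∈ Finset.range (n + 1), p.coeff i * v (s + i) =
          ∑ i ∈ Finset.range (n + T + 1), p.coeff i * v (s + i) := by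
        apply Finset.sum_subset
        · intro i; simp only [Finset.mem_range]; omega
        · intro i _ hi
          simp only [Finset.mem_range] at hi
          rw [coeff_eq_zero_of_natDegree_lt (by omega), zero_mul]
      have e2 : ∑ i ∈ Finset.range (T - s + 1), p.coeff i * v (s + i) =
          ∑ i ∈ Finset.range (n + T + 1), p.coeff i * v (s + i) := by
        apply Finset.sum_subset
        · intro i; simp only [Finset.mem_range]; omega
        · intro i _ hi
          simp only [Finset.mem_range] at hi
          simp only [v]
          rw [if_neg (by omega), mul_zero]
      rw [e1, ← e2]
      rw [← neg_eq_zero, ← Finset.sum_neg_distrib] at h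
      rw [← h]
      apply Finset.sum_congr rfl
      intro i hi
      simp only [Finset.mem_range] at hi
      simp only [v, Polynomial.coeff_coe]
      rw [if_pos (by omega), show T - (s + i) = T - s - i by omega]
      ring
    rw [Finset.sum_range_succ, hpn] at h2
    linarith
  have hFv : ∀ s, s < T + n → F v ((A ^ s) *ᵥ x) = v s := by
    intro s
    induction s using Nat.strong_induction_on with
    | _ s ih =>
      intro hs
      by_cases hsn : s < n
      · exact hF v s hsn
      · obtain ⟨r, rfl⟩ : ∃ r, s = r + n := ⟨s - n, by omega⟩
        rw [hFrec, hvrec r (by omega)]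
        congr 1
        apply Finset.sum_congr rfl
        intro i hi
        simp only [Finset.mem_range] at hi
        rw [ih _ (by omega) (by omega)]
  have hu0 : p.coeff 0 * PowerSeries.coeff 0 u = 1 := by
    have h := congrArg (PowerSeries.coeff 0) hu
    rw [PowerSeries.coeff_mul] at h
    simpa using h
  have hvT : v T = - PowerSeries.coeff 0 u := by simp [v]
  have hv0 : ∀ s, 0 ≤ v s := by
    intro s
    simp only [v]
    split_ifs with h
    · exact hpos _ (by omega)
    · exact le_rfl
  have hlast : F v ((A ^ (T + n)) *ᵥ x) = 1 := by
    rw [hFrec, Finset.sum_eq_single_of_mem 0 (Finset.mem_range.2 (by omega))]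
    · rw [hFv _ (by omega), add_zero, hvT]; linarith
    · intro b hb hb0
      simp only [Finset.mem_range] at hb
      rw [hFv _ (by omega)]
      simp only [v]
      rw [if_neg (by omega), mul_zero]
  suffices h : ∃ K, MemP m K ∧ KPrimitive K A ∧ (n - 2) * (m - 1) + T + n ≤ expnt K A by
    obtain ⟨K, h1, h2, h3⟩ := h
    exact ⟨K, A, h1, h2, h3⟩
  refine construct (m := m) (n := n) (T := T) hn hT hTm hc0 hc1 hrec (F fun _ => 1) ?_ ?_ (F v)
    ?_ ?_ ?_
  · intro j
    induction j using Nat.strong_induction_on with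
    | _ s ih =>
      by_cases hsn : s < n
      · exact hF (fun _ => 1) s hsn
      · obtain ⟨r, rfl⟩ : ∃ r, s = r + n := ⟨s - n, by omega⟩
        rw [hFrec]
        rw [Finset.sum_congr rfl (g := fun i => p.coeff i)]
        · linarith
        · intro i hi
          simp only [Finset.mem_range] at hi
          rw [ih _ (by omega), mul_one]
  · intro g hg
    apply LinearMap.pi_ext'
    intro i
    ext
    have := hg i
    rw [hA1 i i.2] at this
    simpa using this
  · intro h0
    rw [h0] at hlast
    simp at hlast
  · intro j hj
    by_cases h : j < T + n
    · rw [hFv j h]; exact hv0 j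
    · rw [show j = T + n by omega, hlast]; exact zero_le_one
  · intro j h1 h2
    rw [hFv j h2]
    simp only [v]
    rw [if_neg (by omega)]

end Companion

section Trig

/-- Product of consecutive sines. -/
def sinP (α : ℝ) (K : ℕ) (t : ℝ) : ℝ := ∏ i ∈ Finset.range (2 * K), Real.sin ((t + 1 + i) * α)

lemma sinP_step (α : ℝ) (K : ℕ) (t : ℝ) :
    sinP α (K + 1) t - 2 * Real.cos (2 * ((K : ℝ) + 1) * α) * sinP α (K + 1) (t - 1)
      + sinP α (K + 1) (t - 2) =
    sinP α K t * (Real.sin ((2 * K + 1) * α) * Real.sin ((2 * K + 2) * α)) := by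
  have e0 : sinP α (K + 1) t = sinP α K t * Real.sin ((t + 1 + 2 * K) * α)
      * Real.sin ((t + 2 + 2 * K) * α) := by
    unfold sinP
    rw [show 2 * (K + 1) = 2 * K + 1 + 1 by ring, Finset.prod_range_succ, Finset.prod_range_succ]
    push_cast
    rw [show t + 1 + (2 * (K : ℝ) + 1) = t + 2 + 2 * K by ring]
  have e1 : sinP α (K + 1) (t - 1) = sinP α K t * Real.sin ((t + 1 + 2 * K) * α)
      * Real.sin (t * α) := by
    unfold sinP
    rw [show 2 * (K + 1) = 2 * K + 1 + 1 by ring, Finset.prod_range_succ', Finset.prod_range_succ]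
    push_cast
    rw [show t - 1 + 1 + 0 = t by ring, show t - 1 + 1 + (2 * (K : ℝ) + 1) = t + 1 + 2 * K by ring]
    congr 2
    apply Finset.prod_congr rfl
    intro i _
    congr 2
    ring
  have e2 : sinP α (K + 1) (t - 2) = sinP α K t * Real.sin (t * α)
      * Real.sin ((t - 1) * α) := by
    unfold sinP
    rw [show 2 * (K + 1) = 2 * K + 1 + 1 by ring, Finset.prod_range_succ', Finset.prod_range_succ']
    push_cast
    rw [show t - 2 + 1 + 0 = t - 1 by ring, show t - 2 + 1 + 1 = t by ring]
    congr 2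
    apply Finset.prod_congr rfl
    intro i _
    congr 2
    ring
  rw [e0, e1, e2]
  have key : ∀ A B : ℝ, Real.sin (A + B - α) * Real.sin (A + B)
      - 2 * Real.cos B * Real.sin (A + B - α) * Real.sin A + Real.sin A * Real.sin (A - α)
      = Real.sin (B - α) * Real.sin B := by
    intro A B
    have hA := Real.sin_sq_add_cos_sq A
    have hB := Real.sin_sq_add_cos_sq B
    simp only [Real.sin_add, Real.sin_sub, Real.cos_add]
    grind
  have := key (t * α) ((2 * K + 2) * α)
  rw [show t * α + (2 * K + 2) * α - α = (t + 1 + 2 * K) * α by ring,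
    show t * α + (2 * K + 2) * α = (t + 2 + 2 * K) * α by ring,
    show t * α - α = (t - 1) * α by ring,
    show (2 * (K : ℝ) + 2) * α - α = (2 * K + 1) * α by ring] at this
  rw [← this, show 2 * ((K : ℝ) + 1) = 2 * K + 2 by ring]
  ring

lemma sinP_neg_one (α : ℝ) (K : ℕ) : sinP α (K + 1) (-1) = 0 := by
  unfold sinP
  apply Finset.prod_eq_zero (i := 0) (by simp)
  simp

lemma sinP_neg_two (α : ℝ) (K : ℕ) : sinP α (K + 1) (-2) = 0 := by
  unfold sinP
  apply Finset.prod_eq_zero (i := 1) (by simp; omega)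
  norm_num

lemma sinP_zero_succ (α : ℝ) (K : ℕ) : sinP α (K + 1) 0 =
    sinP α K 0 * (Real.sin ((2 * K + 1) * α) * Real.sin ((2 * K + 2) * α)) := by
  have := sinP_step α K 0
  rw [show (0:ℝ) - 1 = -1 by ring, show (0:ℝ) - 2 = -2 by ring, sinP_neg_one, sinP_neg_two] at this
  linarith

/-- Gaussian-binomial type weights. -/
def sinW (α : ℝ) (K : ℕ) (t : ℝ) : ℝ := sinP α K t / sinP α K 0

lemma sinW_step (α : ℝ) (K : ℕ) (t : ℝ) (h : sinP α (K + 1) 0 ≠ 0) :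
    sinW α (K + 1) t - 2 * Real.cos (2 * ((K : ℝ) + 1) * α) * sinW α (K + 1) (t - 1)
      + sinW α (K + 1) (t - 2) = sinW α K t := by
  unfold sinW
  have h2 := h
  rw [sinP_zero_succ] at h2
  have h3 := left_ne_zero_of_mul h2
  have h4 := right_ne_zero_of_mul h2
  have := sinP_step α K t
  rw [eq_div_iff h3]
  rw [show (sinP α (K + 1) t / sinP α (K + 1) 0 -
          2 * Real.cos (2 * ((K : ℝ) + 1) * α) * (sinP α (K + 1) (t - 1) / sinP α (K + 1) 0) +
        sinP α (K + 1) (t - 2) / sinP α (K + 1) 0) = (sinP α (K + 1) t - 2 * Real.cos (2 * ((K : ℝ) + 1) * α) * sinP α (K + 1) (t - 1)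
      + sinP α (K + 1) (t - 2)) / sinP α (K + 1) 0 by ring, this, sinP_zero_succ,
    mul_comm (sinP α K t), mul_comm (sinP α K 0), mul_div_mul_left _ _ h4, div_mul_cancel₀ _ h3]

lemma mk_quad (a b' : ℕ → ℝ) (b : ℝ) (h0 : b' 0 = a 0) (h1 : b' 1 = a 1 - b * a 0)
    (h2 : ∀ j, b' (j + 2) = a (j + 2) - b * a (j + 1) + a j) :
    PowerSeries.mk a * (1 - PowerSeries.C b * PowerSeries.X + PowerSeries.X ^ 2)
      = PowerSeries.mk b' := by
  ext j
  have e : PowerSeries.mk a * (1 - PowerSeries.C b * PowerSeries.X + PowerSeries.X ^ 2) =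
      PowerSeries.mk a - PowerSeries.C b * (PowerSeries.mk a * PowerSeries.X) +
        PowerSeries.mk a * PowerSeries.X * PowerSeries.X := by ring
  rw [e]
  simp only [map_add, map_sub, PowerSeries.coeff_C_mul, PowerSeries.coeff_mk]
  match j with
  | 0 => simp [h0]
  | 1 =>
    rw [show (1 : ℕ) = 0 + 1 from rfl]
    rw [PowerSeries.coeff_succ_mul_X, PowerSeries.coeff_succ_mul_X]
    simp [h1]
  | j + 2 =>
    rw [PowerSeries.coeff_succ_mul_X, PowerSeries.coeff_succ_mul_X, PowerSeries.coeff_succ_mul_X]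
    simp [h2]

lemma sinW_inv (α : ℝ) (K : ℕ) (h : ∀ L ≤ K, sinP α L 0 ≠ 0) :
    PowerSeries.mk (fun j : ℕ => sinW α K j) * ((1 - PowerSeries.X) *
      ∏ k ∈ Finset.range K, (1 - PowerSeries.C (2 * Real.cos (2 * ((k : ℝ) + 1) * α)) *
        PowerSeries.X + PowerSeries.X ^ 2)) = 1 := by
  induction K with
  | zero =>
    have : (fun j : ℕ => sinW α 0 j) = 1 := by
      funext j; simp [sinW, sinP]
    rw [this]
    simpa using PowerSeries.mk_one_mul_one_sub_eq_one ℝ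
  | succ K ih =>
    have ih' := ih (fun L hL => h L (by omega))
    rw [← mk_quad (fun j : ℕ => sinW α (K + 1) j) (fun j : ℕ => sinW α K j)
        (2 * Real.cos (2 * ((K : ℝ) + 1) * α))] at ih'
    · rw [Finset.prod_range_succ]
      refine Eq.trans ?_ ih'
      generalize ∏ k ∈ Finset.range K, (1 - PowerSeries.C (2 * Real.cos (2 * ((k : ℝ) + 1) * α)) *
        PowerSeries.X + PowerSeries.X ^ 2) = Q
      ring
    · have := sinW_step α K 0 (h _ le_rfl)
      rw [show (0:ℝ) - 1 = -1 by ring, show (0:ℝ) - 2 = -2 by ring] at this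
      have h1 : sinW α (K + 1) (-1) = 0 := by rw [sinW, sinP_neg_one, zero_div]
      have h2 : sinW α (K + 1) (-2) = 0 := by rw [sinW, sinP_neg_two, zero_div]
      rw [h1, h2] at this
      push_cast
      linarith
    · have := sinW_step α K 1 (h _ le_rfl)
      rw [show (1:ℝ) - 1 = 0 by ring, show (1:ℝ) - 2 = -1 by ring] at this
      have h1 : sinW α (K + 1) (-1) = 0 := by rw [sinW, sinP_neg_one, zero_div]
      rw [h1] at this
      push_cast
      linarith
    · intro j
      have := sinW_step α K (j + 2) (h _ le_rfl)
      rw [show (j:ℝ) + 2 - 1 = j + 1 by ring, show (j:ℝ) + 2 - 2 = j by ring] at this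
      push_cast
      linarith

lemma sin_pos_nat {M a : ℕ} (h0 : 0 < a) (h1 : a < M) : 0 < Real.sin ((a : ℝ) * (π / M)) := by
  have hM : (0 : ℝ) < M := by exact_mod_cast (by omega : 0 < M)
  have ha : (0 : ℝ) < a := by exact_mod_cast h0
  apply Real.sin_pos_of_pos_of_lt_pi
  · have := Real.pi_pos
    positivity
  · rw [← mul_div_assoc, div_lt_iff₀ hM, mul_comm]
    have : (a : ℝ) < M := by exact_mod_cast h1
    exact mul_lt_mul_of_pos_left this Real.pi_pos

lemma sinP_pos {M K j : ℕ} (h : j + 2 * K < M) : 0 < sinP (π / M) K j := by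
  unfold sinP
  apply Finset.prod_pos
  intro i hi
  simp only [Finset.mem_range] at hi
  have := sin_pos_nat (M := M) (a := j + 1 + i) (by omega) (by omega)
  push_cast at this
  exact this

lemma sinW_pos {M K j : ℕ} (h : j + 2 * K < M) : 0 < sinW (π / M) K j := by
  have h2 := sinP_pos (M := M) (K := K) (j := 0) (by omega)
  push_cast at h2
  exact div_pos (sinP_pos h) h2

lemma sinW_symm {M K j j' : ℕ} (h : j + j' + 2 * K + 1 = M) :
    sinW (π / M) K j = sinW (π / M) K j' := by
  unfold sinW
  congr 1
  unfold sinP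
  rw [← Finset.prod_range_reflect]
  apply Finset.prod_congr rfl
  intro i hi
  simp only [Finset.mem_range] at hi
  rw [← Real.sin_pi_sub]
  congr 1
  have hM : (M : ℝ) ≠ 0 := by exact_mod_cast (by omega : M ≠ 0)
  have e : ((2 * K - 1 - i : ℕ) : ℝ) = 2 * K - 1 - i := by
    rw [Nat.cast_sub (by omega), Nat.cast_sub (by omega)]
    push_cast; ring
  rw [e]
  have hM2 : (M : ℝ) = j + j' + 2 * K + 1 := by rw [← h]; push_cast; ring
  field_simp
  rw [hM2]
  ring

lemma sinW_lt {M K j : ℕ} (hK : 1 ≤ K) (h : 2 * j + 2 * K + 2 < M) :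
    sinW (π / M) K j < sinW (π / M) K (j + 1 : ℕ) := by
  have h2 := sinP_pos (M := M) (K := K) (j := 0) (by omega)
  push_cast at h2
  unfold sinW
  apply div_lt_div_of_pos_right _ h2
  have e : sinP (π / M) K (j + 1 : ℕ) * Real.sin (((j + 1 : ℕ) : ℝ) * (π / M)) =
      sinP (π / M) K j * Real.sin (((j + 2 * K + 1 : ℕ) : ℝ) * (π / M)) := by
    unfold sinP
    have := Finset.prod_range_succ (fun i : ℕ => Real.sin (((j : ℝ) + 1 + i) * (π / M))) (2 * K)
    rw [Finset.prod_range_succ'] at this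
    push_cast at this ⊢
    rw [add_zero] at this
    rw [show (j : ℝ) + 2 * K + 1 = j + 1 + 2 * K by ring, ← this]
    congr 1
    apply Finset.prod_congr rfl
    intro i _
    congr 2
    ring
  have hs1 := sin_pos_nat (M := M) (a := j + 1) (by omega) (by omega)
  have hp := sinP_pos (M := M) (K := K) (j := j) (by omega)
  have hs2 : Real.sin (((j + 1 : ℕ) : ℝ) * (π / M)) <
      Real.sin (((j + 2 * K + 1 : ℕ) : ℝ) * (π / M)) := by
    rw [← sub_pos, Real.sin_sub_sin]
    have a1 := sin_pos_nat (M := M) (a := K) (by omega) (by omega)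
    have hM : (0 : ℝ) < M := by exact_mod_cast (by omega : 0 < M)
    have a2 : 0 < Real.cos (((j + K + 1 : ℕ) : ℝ) * (π / M)) := by
      apply Real.cos_pos_of_mem_Ioo
      constructor
      · have := Real.pi_pos
        have : 0 ≤ ((j + K + 1 : ℕ) : ℝ) * (π / M) := by positivity
        linarith
      · have : (2 : ℝ) * ((j + K + 1 : ℕ) : ℝ) < M := by exact_mod_cast (by omega)
        rw [← mul_div_assoc, div_lt_iff₀ hM]
        nlinarith [Real.pi_pos]
    have e1 : (((j + 2 * K + 1 : ℕ) : ℝ) * (π / M) - ((j + 1 : ℕ) : ℝ) * (π / M)) / 2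
        = K * (π / M) := by push_cast; ring
    have e2 : (((j + 2 * K + 1 : ℕ) : ℝ) * (π / M) + ((j + 1 : ℕ) : ℝ) * (π / M)) / 2
        = ((j + K + 1 : ℕ) : ℝ) * (π / M) := by push_cast; ring
    rw [e1, e2]
    positivity
  nlinarith [mul_lt_mul_of_pos_left hs2 hp]

/-- Alternating partial sums. -/
def altS (w : ℕ → ℝ) : ℕ → ℝ
  | 0 => w 0
  | j + 1 => w (j + 1) - altS w j

lemma altS_mul (w : ℕ → ℝ) : PowerSeries.mk (altS w) * (1 + PowerSeries.X) = PowerSeries.mk w := by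
  ext j
  rw [mul_add, mul_one, map_add]
  cases j with
  | zero => simp [altS]
  | succ j => rw [PowerSeries.coeff_succ_mul_X]; simp [altS]

lemma altS_pos {w : ℕ → ℝ} {d : ℕ} (h0 : 0 < w 0) (hlt : ∀ j < d, w j < w (j + 1))
    (hsym : ∀ i ≤ d, w (d + 1 + i) = w (d - i)) : ∀ j ≤ 2 * d, 0 < altS w j := by
  have h1 : ∀ j ≤ d, 0 < altS w j ∧ altS w j ≤ w j := by
    intro j
    induction j with
    | zero => intro _; simp [altS, h0]
    | succ j ih =>
      intro hj
      have := ih (by omega)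
      have := hlt j (by omega)
      simp only [altS]
      constructor <;> linarith
  have h2 : ∀ i ≤ d, altS w (d + i) = altS w (d - i) := by
    intro i
    induction i with
    | zero => intro _; simp
    | succ i ih =>
      intro hi
      have e := ih (by omega)
      obtain ⟨r, hr⟩ : ∃ r, d - i = r + 1 := ⟨d - i - 1, by omega⟩
      rw [show d + (i + 1) = (d + i) + 1 by ring, show d - (i + 1) = r by omega]
      simp only [altS]
      rw [e, show d + i + 1 = d + 1 + i by ring, hsym i (by omega), hr]
      simp only [altS]
      ring
  intro j hj
  by_cases hjd : j ≤ d
  · exact (h1 j hjd).1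
  · obtain ⟨i, rfl⟩ : ∃ i, j = d + i := ⟨j - d, by omega⟩
    rw [h2 i (by omega)]
    exact (h1 _ (by omega)).1

lemma altS_sinW_pos {M K d j : ℕ} (hK : 1 ≤ K) (hM : M = 2 * d + 2 * K + 2) (hj : j ≤ 2 * d) :
    0 < altS (fun j : ℕ => sinW (π / M) K j) j := by
  apply altS_pos (d := d) _ _ _ j hj
  · exact sinW_pos (by omega)
  · intro j hj
    exact sinW_lt hK (by omega)
  · intro i hi
    exact sinW_symm (by omega)

end Trig

section Perturb
open Polynomial Filter Topology
open scoped PowerSeries.WithPiTopology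

lemma multiset_pow_le (r : ℝ) (hr : 0 ≤ r) (s : Multiset ℝ) (h : ∀ a ∈ s, r ≤ a) :
    r ^ (Multiset.card s) ≤ s.prod := by
  induction s using Multiset.induction_on with
  | empty => simp
  | cons a s ih =>
    rw [Multiset.card_cons, Multiset.prod_cons, pow_succ']
    have h1 := h a (Multiset.mem_cons_self a s)
    have h2 := ih (fun b hb => h b (Multiset.mem_cons_of_mem hb))
    exact mul_le_mul h1 h2 (pow_nonneg hr _) (hr.trans h1)

lemma near_root (q : ℂ[X]) (hq : q.Monic) (h0 : q.natDegree ≠ 0) (z : ℂ) :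
    ∃ w, q.eval w = 0 ∧ ‖z - w‖ ^ q.natDegree ≤ ‖q.eval z‖ := by
  have hs := IsAlgClosed.splits q
  have hcard := hs.natDegree_eq_card_roots
  have hne : q.roots ≠ 0 := by
    intro h
    rw [h] at hcard
    simp at hcard
    exact h0 hcard
  have hne2 : q.roots.toFinset.Nonempty := by
    rw [Multiset.toFinset_nonempty]; exact hne
  obtain ⟨w, hw, hmin⟩ := Finset.exists_min_image q.roots.toFinset (fun w => ‖z - w‖) hne2
  refine ⟨w, (mem_roots'.1 (Multiset.mem_toFinset.1 hw)).2, ?_⟩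
  rw [hs.eval_eq_prod_roots_of_monic hq]
  have e : ‖(q.roots.map (fun x => z - x)).prod‖ = (q.roots.map (fun x => ‖z - x‖)).prod := by
    have := map_multiset_prod (normHom : ℂ →*₀ ℝ) (q.roots.map (fun x => z - x))
    rw [Multiset.map_map] at this
    exact this
  rw [e, hcard]
  have := multiset_pow_le ‖z - w‖ (norm_nonneg _) (q.roots.map (fun x => ‖z - x‖)) (by
    intro a ha
    obtain ⟨x, hx, rfl⟩ := Multiset.mem_map.1 ha
    exact hmin x (Multiset.mem_toFinset.2 hx))
  rwa [Multiset.card_map] at this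

/-- The characteristic type polynomial. -/
def hpoly (m : ℕ) (c : ℝ) : ℝ[X] := X ^ m - C c * X - C (1 - c)

lemma hpoly_monic {m : ℕ} (hm : 2 ≤ m) (c : ℝ) : (hpoly m c).Monic ∧ (hpoly m c).natDegree = m := by
  have hd : (C c * X + C (1 - c) : ℝ[X]).degree < (m : ℕ) := by
    refine lt_of_le_of_lt degree_linear_le ?_
    exact_mod_cast (by omega : 1 < m)
  have e : hpoly m c = X ^ m - (C c * X + C (1 - c)) := by unfold hpoly; ring
  rw [e]
  refine ⟨monic_X_pow_sub (by simpa using hd), ?_⟩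
  rw [natDegree_sub_eq_left_of_natDegree_lt, natDegree_X_pow]
  rw [natDegree_X_pow]
  exact lt_of_le_of_lt natDegree_linear_le (by omega)

lemma hpoly_aeval (m : ℕ) (c : ℝ) (z : ℂ) : aeval z (hpoly m c) = z ^ m - c * z - (1 - c) := by
  simp [hpoly]

lemma root_tendsto {m : ℕ} (hm : 2 ≤ m) {l : Filter ℝ} {c : ℝ → ℝ} {c0 : ℝ}
    (hc : Tendsto c l (𝓝 c0)) {ω : ℂ} (hω : aeval ω (hpoly m c0) = 0) :
    ∃ r : ℝ → ℂ, (∀ s, aeval (r s) (hpoly m (c s)) = 0) ∧ Tendsto r l (𝓝 ω) := by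
  have h : ∀ s, ∃ w, aeval w (hpoly m (c s)) = 0 ∧ ‖ω - w‖ ^ m ≤ ‖aeval ω (hpoly m (c s))‖ := by
    intro s
    obtain ⟨h1, h2⟩ := hpoly_monic hm (c s)
    have hd : ((hpoly m (c s)).map (algebraMap ℝ ℂ)).natDegree = m := by
      rw [h1.natDegree_map, h2]
    obtain ⟨w, h3, h4⟩ := near_root ((hpoly m (c s)).map (algebraMap ℝ ℂ)) (h1.map _)
      (by rw [hd]; omega) ω
    rw [hd] at h4
    rw [eval_map_algebraMap] at h3 h4
    exact ⟨w, h3, h4⟩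
  choose r hr1 hr2 using h
  refine ⟨r, hr1, ?_⟩
  have ht : Tendsto (fun s => ‖aeval ω (hpoly m (c s))‖) l (𝓝 0) := by
    have hc' : Tendsto (fun s => ((c s : ℝ) : ℂ)) l (𝓝 (c0 : ℂ)) :=
      (Complex.continuous_ofReal.tendsto c0).comp hc
    have : Tendsto (fun s => aeval ω (hpoly m (c s))) l (𝓝 (aeval ω (hpoly m c0))) := by
      simp only [hpoly_aeval]
      exact (tendsto_const_nhds.sub (hc'.mul tendsto_const_nhds)).sub (tendsto_const_nhds.sub hc')
    rw [hω] at this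
    simpa using this.norm
  rw [Metric.tendsto_nhds]
  intro ε hε
  have := ht.eventually (gt_mem_nhds (pow_pos hε m))
  filter_upwards [this] with s hs
  rw [dist_comm, dist_eq_norm]
  exact lt_of_pow_lt_pow_left₀ m hε.le (lt_of_le_of_lt (hr2 s) hs)

/-- Real quadratic with root `z`. -/
def quadP (z : ℂ) : ℝ[X] := X ^ 2 - C (2 * z.re) * X + C (‖z‖ ^ 2)

lemma quadP_monic (z : ℂ) : (quadP z).Monic ∧ (quadP z).natDegree = 2 := by
  have e : quadP z = C 1 * X ^ 2 + C (-(2 * z.re)) * X + C (‖z‖ ^ 2) := by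
    simp [quadP, sub_eq_add_neg]
  have hd : (quadP z).natDegree = 2 := by
    rw [e]; exact natDegree_quadratic one_ne_zero
  refine ⟨?_, hd⟩
  rw [e]
  exact leadingCoeff_quadratic one_ne_zero

lemma quadP_aeval (z : ℂ) : aeval z (quadP z) = 0 := by
  have h : ((‖z‖ ^ 2 : ℝ) : ℂ) = z * (starRingEnd ℂ) z := by
    rw [Complex.mul_conj, Complex.normSq_eq_norm_sq]
  have h2 : ((2 * z.re : ℝ) : ℂ) = z + (starRingEnd ℂ) z := by
    rw [Complex.add_conj]
  have e : aeval z (quadP z) = z ^ 2 - ((2 * z.re : ℝ) : ℂ) * z + ((‖z‖ ^ 2 : ℝ) : ℂ) := by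
    simp [quadP]
  rw [e, h2, h]
  ring

lemma quadP_irred {z : ℂ} (hz : z.im ≠ 0) : Irreducible (quadP z) := by
  apply irreducible_of_degree_le_three_of_not_isRoot
  · rw [(quadP_monic z).2]; simp
  · intro x hx
    simp only [quadP, IsRoot, eval_add, eval_sub, eval_mul, eval_pow, eval_X, eval_C] at hx
    rw [← Complex.normSq_eq_norm_sq, Complex.normSq_apply] at hx
    have : 0 < z.im * z.im := mul_self_pos.2 hz
    nlinarith [sq_nonneg (x - z.re)]

lemma quadP_coprime {z w : ℂ} (hz : z.im ≠ 0) (h : z.re ≠ w.re) : IsCoprime (quadP z) (quadP w) := by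
  rw [(quadP_irred hz).coprime_iff_not_dvd]
  intro hd
  have e := eq_of_monic_of_dvd_of_natDegree_le (quadP_monic z).1 (quadP_monic w).1 hd
    (by rw [(quadP_monic z).2, (quadP_monic w).2])
  have := congrArg (fun p => coeff p 1) e
  simp only [quadP, coeff_add, coeff_sub, coeff_C_mul, coeff_X_pow, coeff_X_one, coeff_C] at this
  norm_num at this
  exact h this.symm

lemma prod_dvd_hpoly {K : ℕ} {q b : ℝ[X]} (z : ℕ → ℂ) (hz : ∀ k < K, aeval (z k) q = 0)
    (him : ∀ k < K, (z k).im ≠ 0) (hre : ∀ k < K, ∀ j < K, k ≠ j → (z k).re ≠ (z j).re)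
    (hb : b ∣ q) (hbim : ∀ w : ℂ, aeval w b = 0 → w.im = 0) :
    b * ∏ k ∈ Finset.range K, quadP (z k) ∣ q := by
  apply IsCoprime.mul_dvd _ hb
  · apply Finset.prod_dvd_of_coprime
    · intro i hi j hj hij
      simp only [Finset.coe_range, Set.mem_Iio] at hi hj
      exact quadP_coprime (him i hi) (hre i hi j hj hij)
    · intro i hi
      simp only [Finset.mem_range] at hi
      exact quadratic_dvd_of_aeval_eq_zero_im_ne_zero q (hz i hi) (him i hi)
  · apply IsCoprime.prod_right
    intro i hi
    simp only [Finset.mem_range] at hi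
    rw [isCoprime_comm, (quadP_irred (him i hi)).coprime_iff_not_dvd]
    rintro ⟨r, hr⟩
    apply him i hi
    apply hbim
    rw [hr, map_mul, quadP_aeval, zero_mul]

lemma tendsto_inv_coeff {l : Filter ℝ} {F : ℝ → PowerSeries ℝ} {F0 : PowerSeries ℝ}
    (hF : Tendsto F l (𝓝 F0)) (h0 : PowerSeries.constantCoeff F0 ≠ 0) (j : ℕ) :
    Tendsto (fun s => PowerSeries.coeff j (F s)⁻¹) l (𝓝 (PowerSeries.coeff j F0⁻¹)) := by
  rw [PowerSeries.WithPiTopology.tendsto_iff_coeff_tendsto] at hF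
  have hc : Tendsto (fun s => (PowerSeries.constantCoeff (F s))⁻¹) l
      (𝓝 (PowerSeries.constantCoeff F0)⁻¹) := by
    have := hF 0
    simp only [PowerSeries.coeff_zero_eq_constantCoeff] at this
    exact this.inv₀ h0
  induction j using Nat.strong_induction_on with
  | _ j ih =>
    simp only [PowerSeries.coeff_inv j]
    by_cases hj : j = 0
    · simpa [hj] using hc
    · simp only [hj, if_false]
      apply hc.neg.mul
      apply tendsto_finsetSum
      intro x _
      by_cases hx : x.2 < j
      · simp only [hx, if_true]
        exact (hF _).mul (ih _ hx)
      · simp only [hx, if_false]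
        exact tendsto_const_nhds

lemma quadP_tendsto {l : Filter ℝ} {r : ℝ → ℂ} {ω : ℂ} (h : Tendsto r l (𝓝 ω)) :
    Tendsto (fun s => ((quadP (r s) : ℝ[X]) : PowerSeries ℝ)) l (𝓝 (quadP ω : PowerSeries ℝ)) := by
  rw [PowerSeries.WithPiTopology.tendsto_iff_coeff_tendsto]
  intro d
  simp only [Polynomial.coeff_coe, quadP, coeff_add, coeff_sub, coeff_C_mul, coeff_C]
  have h1 : Tendsto (fun s => (r s).re) l (𝓝 ω.re) := (Complex.continuous_re.tendsto ω).comp h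
  apply Tendsto.add
  · exact tendsto_const_nhds.sub ((h1.const_mul 2).mul tendsto_const_nhds)
  · by_cases hd : d = 0
    · simp only [hd, if_true]
      exact h.norm.pow 2
    · simp only [hd, if_false]
      exact tendsto_const_nhds

lemma limit_good {m n T K : ℕ} (hn : 3 ≤ n) (hT : T + n ≤ m) (hTm : m ≤ T + n + 1)
    {c : ℝ → ℝ} {c0 : ℝ} (hc : Tendsto c (𝓝[<] 1) (𝓝 c0))
    (hc0 : ∀ᶠ s in 𝓝[<] (1 : ℝ), 0 < c s) (hc1 : ∀ᶠ s in 𝓝[<] (1 : ℝ), c s < 1)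
    (ω : ℕ → ℂ) (hω : ∀ k < K, aeval (ω k) (hpoly m c0) = 0) (him : ∀ k < K, (ω k).im ≠ 0)
    (hre : ∀ k < K, ∀ j < K, k ≠ j → (ω k).re ≠ (ω j).re)
    (b : ℝ → ℝ[X]) (hbm : ∀ s, (b s).Monic) (hbd : ∀ s, (b s).natDegree + 2 * K = n)
    (hb1 : ∀ s, (b s).eval 1 = 0) (hbim : ∀ s, ∀ w : ℂ, aeval w (b s) = 0 → w.im = 0)
    (hbdvd : ∀ᶠ s in 𝓝[<] (1 : ℝ), b s ∣ hpoly m (c s))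
    (hbt : Tendsto (fun s => (b s : PowerSeries ℝ)) (𝓝[<] 1) (𝓝 (b 1 : PowerSeries ℝ)))
    (U : ℕ → ℝ) (hU : ∀ j ≤ T, 0 < U j)
    (hinv : PowerSeries.mk U * (- ((b 1 : PowerSeries ℝ) *
      ∏ k ∈ Finset.range K, (quadP (ω k) : PowerSeries ℝ))) = 1) :
    ∃ (K : Set (Fin n → ℝ)) (A : Matrix (Fin n) (Fin n) ℝ), MemP m K ∧ KPrimitive K A ∧
      (n - 2) * (m - 1) + T + n ≤ expnt K A := by
  have hr : ∀ k, ∃ r : ℝ → ℂ, k < K → (∀ s, aeval (r s) (hpoly m (c s)) = 0) ∧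
      Tendsto r (𝓝[<] 1) (𝓝 (ω k)) := by
    intro k
    by_cases hk : k < K
    · obtain ⟨r, h⟩ := root_tendsto (by omega : 2 ≤ m) hc (hω k hk)
      exact ⟨r, fun _ => h⟩
    · exact ⟨fun _ => 0, fun h => absurd h hk⟩
  choose r hr using hr
  let P : ℝ → ℝ[X] := fun s => b s * ∏ k ∈ Finset.range K, quadP (r k s)
  let P0 : PowerSeries ℝ := (b 1 : PowerSeries ℝ) *
      ∏ k ∈ Finset.range K, (quadP (ω k) : PowerSeries ℝ)
  have hPt : Tendsto (fun s => (P s : PowerSeries ℝ)) (𝓝[<] 1) (𝓝 P0) := by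
    have e : ∀ s, (P s : PowerSeries ℝ) = (b s : PowerSeries ℝ) *
        ∏ k ∈ Finset.range K, (quadP (r k s) : PowerSeries ℝ) := by
      intro s
      simp only [P, Polynomial.coe_mul]
      congr 1
      exact map_prod (Polynomial.coeToPowerSeries.ringHom (R := ℝ)) (fun k => quadP (r k s)) (Finset.range K)
    simp only [e]
    apply hbt.mul
    apply tendsto_finsetProd
    intro k hk
    exact quadP_tendsto (hr k (Finset.mem_range.1 hk)).2
  have hinv2 : (- PowerSeries.mk U) * P0 = 1 := by
    rw [← hinv]; simp only [P0]; ring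
  have hP0 : PowerSeries.constantCoeff P0 ≠ 0 := by
    intro h
    have := congrArg PowerSeries.constantCoeff hinv2
    rw [map_mul, h] at this
    simp at this
  have hPinv : P0⁻¹ = - PowerSeries.mk U := ((PowerSeries.eq_inv_iff_mul_eq_one hP0).2 hinv2).symm
  have ev1 : ∀ j ≤ T, ∀ᶠ s in 𝓝[<] (1 : ℝ), 0 < - PowerSeries.coeff j (P s : PowerSeries ℝ)⁻¹ := by
    intro j hj
    have := (tendsto_inv_coeff hPt hP0 j).neg
    rw [hPinv, map_neg, neg_neg, PowerSeries.coeff_mk] at this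
    exact this.eventually (lt_mem_nhds (hU j hj))
  have ev1' : ∀ᶠ s in 𝓝[<] (1 : ℝ), ∀ j ∈ Finset.range (T + 1),
      0 < - PowerSeries.coeff j (P s : PowerSeries ℝ)⁻¹ := by
    rw [Filter.eventually_all_finset]
    intro j hj
    exact ev1 j (by simpa [Nat.lt_succ_iff] using hj)
  have ev2 : ∀ᶠ s in 𝓝[<] (1 : ℝ), ∀ k ∈ Finset.range K, (r k s).im ≠ 0 := by
    rw [Filter.eventually_all_finset]
    intro k hk
    rw [Finset.mem_range] at hk
    have := (Complex.continuous_im.tendsto (ω k)).comp (hr k hk).2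
    exact Filter.Tendsto.eventually_ne this (him k hk)
  have ev3 : ∀ᶠ s in 𝓝[<] (1 : ℝ), ∀ k ∈ Finset.range K, ∀ j ∈ Finset.range K, k ≠ j →
      (r k s).re ≠ (r j s).re := by
    rw [Filter.eventually_all_finset]
    intro k hk
    rw [Filter.eventually_all_finset]
    intro j hj
    rw [Finset.mem_range] at hk hj
    by_cases hkj : k = j
    · exact Filter.Eventually.of_forall fun s h => absurd hkj h
    · have h1 := (Complex.continuous_re.tendsto (ω k)).comp (hr k hk).2
      have h2 := (Complex.continuous_re.tendsto (ω j)).comp (hr j hj).2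
      filter_upwards [Filter.Tendsto.eventually_ne (h1.sub h2) (sub_ne_zero.2 (hre k hk j hj hkj))] with s hs _
      exact sub_ne_zero.1 hs
  have ev4 : ∀ᶠ s in 𝓝[<] (1 : ℝ), PowerSeries.constantCoeff (P s : PowerSeries ℝ) ≠ 0 := by
    have := (PowerSeries.WithPiTopology.tendsto_iff_coeff_tendsto ℝ _ _ _).1 hPt 0
    simp only [PowerSeries.coeff_zero_eq_constantCoeff] at this
    exact Filter.Tendsto.eventually_ne this hP0
  obtain ⟨s, h0, h1, h2, h3, h4, h5, h6⟩ :=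
    (hc0.and (hc1.and (hbdvd.and (ev1'.and (ev2.and (ev3.and ev4)))))).exists
  refine good_construct hn hT hTm h0 h1 (P s) ?_ ?_ ?_ ?_ (P s : PowerSeries ℝ)⁻¹ ?_ ?_
  · exact (hbm s).mul (monic_prod_of_monic _ _ fun k _ => (quadP_monic _).1)
  · rw [(hbm s).natDegree_mul (monic_prod_of_monic _ _ fun k _ => (quadP_monic _).1),
      natDegree_prod_of_monic _ _ fun k _ => (quadP_monic _).1]
    simp only [(quadP_monic _).2, Finset.sum_const, Finset.card_range, smul_eq_mul]
    have := hbd s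
    omega
  · exact prod_dvd_hpoly (fun k => r k s) (fun k hk => (hr k hk).1 s)
      (fun k hk => h4 k (Finset.mem_range.2 hk))
      (fun k hk j hj => h5 k (Finset.mem_range.2 hk) j (Finset.mem_range.2 hj)) h2 (hbim s)
  · rw [eval_mul, hb1 s, zero_mul]
  · exact PowerSeries.mul_inv_cancel _ h6
  · intro j hj
    exact (h3 j (Finset.mem_range.2 (by omega))).le

end Perturb

section Final
open Polynomial Filter Topology
open scoped PowerSeries.WithPiTopology

/-- Roots of unity in the upper half plane. -/
def rootU (M k : ℕ) : ℂ := Complex.exp ((2 * ((k : ℝ) + 1) * (π / M) : ℝ) * Complex.I)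

lemma rootU_re (M k : ℕ) : (rootU M k).re = Real.cos (2 * ((k : ℝ) + 1) * (π / M)) :=
  Complex.exp_ofReal_mul_I_re _

lemma rootU_im (M k : ℕ) : (rootU M k).im = Real.sin (2 * ((k : ℝ) + 1) * (π / M)) :=
  Complex.exp_ofReal_mul_I_im _

lemma rootU_norm (M k : ℕ) : ‖rootU M k‖ = 1 := Complex.norm_exp_ofReal_mul_I _

lemma rootU_pow {M : ℕ} (hM : 0 < M) (k : ℕ) : rootU M k ^ M = 1 := by
  unfold rootU
  rw [← Complex.exp_nat_mul, Complex.exp_eq_one_iff]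
  refine ⟨k + 1, ?_⟩
  have : (M : ℂ) ≠ 0 := by exact_mod_cast hM.ne'
  push_cast
  field_simp

lemma rootU_im_ne {M K k : ℕ} (hK : 2 * K < M) (hk : k < K) : (rootU M k).im ≠ 0 := by
  rw [rootU_im]
  have := sin_pos_nat (M := M) (a := 2 * (k + 1)) (by omega) (by omega)
  push_cast at this
  exact this.ne'

lemma rootU_re_ne {M K k j : ℕ} (hK : 2 * K < M) (hk : k < K) (hj : j < K) (hkj : k ≠ j) :
    (rootU M k).re ≠ (rootU M j).re := by
  rw [rootU_re, rootU_re]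
  have hM : (0 : ℝ) < M := by exact_mod_cast (by omega : 0 < M)
  have hmem : ∀ i < K, 2 * ((i : ℝ) + 1) * (π / M) ∈ Set.Icc 0 π := by
    intro i hi
    have hpi := Real.pi_pos
    constructor
    · positivity
    · rw [← mul_div_assoc, div_le_iff₀ hM, mul_comm]
      have : 2 * ((i : ℝ) + 1) ≤ M := by exact_mod_cast (by omega : 2 * (i + 1) ≤ M)
      exact mul_le_mul_of_nonneg_left this hpi.le
  intro h
  have := Real.injOn_cos (hmem k hk) (hmem j hj) h
  have hα : π / M ≠ 0 := (div_pos Real.pi_pos hM).ne'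
  have h2 := mul_right_cancel₀ hα this
  apply hkj
  have : (k : ℝ) = j := by linarith
  exact_mod_cast this

lemma quadP_rootU (M k : ℕ) : (quadP (rootU M k) : PowerSeries ℝ) =
    1 - PowerSeries.C (2 * Real.cos (2 * ((k : ℝ) + 1) * (π / M))) * PowerSeries.X
      + PowerSeries.X ^ 2 := by
  unfold quadP
  rw [rootU_norm, rootU_re]
  simp only [Polynomial.coe_add, Polynomial.coe_sub, Polynomial.coe_mul, Polynomial.coe_pow,
    Polynomial.coe_X, Polynomial.coe_C, one_pow, map_one, Polynomial.coe_one]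
  ring

lemma sinW_inv_rootU {M K : ℕ} (hK : 2 * K < M) :
    PowerSeries.mk (fun j : ℕ => sinW (π / M) K j) * ((1 - PowerSeries.X) *
      ∏ k ∈ Finset.range K, (quadP (rootU M k) : PowerSeries ℝ)) = 1 := by
  simp only [quadP_rootU]
  apply sinW_inv
  intro L hL
  have h2 := sinP_pos (M := M) (K := L) (j := 0) (by omega)
  push_cast at h2
  exact h2.ne'

lemma tendsto_id_one : Tendsto (fun s : ℝ => s) (𝓝[<] 1) (𝓝 1) :=
  tendsto_nhdsWithin_of_tendsto_nhds tendsto_id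

lemma ev_Ioo : ∀ᶠ s in 𝓝[<] (1 : ℝ), 0 < s ∧ s < 1 := by
  filter_upwards [Ioo_mem_nhdsLT (zero_lt_one' ℝ)] with s hs
  exact hs

lemma exists_odd {m n : ℕ} (hn : 3 ≤ n) (hnm : n ≤ m) (hodd : Odd n) :
    ∃ (K : Set (Fin n → ℝ)) (A : Matrix (Fin n) (Fin n) ℝ), MemP m K ∧ KPrimitive K A ∧
      (n - 2) * (m - 1) + (m - n) + n ≤ expnt K A := by
  obtain ⟨K, hK⟩ := hodd
  have hlim : Tendsto (fun s : ℝ => 1 - s) (𝓝[<] 1) (𝓝 0) := by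
    have := (tendsto_const_nhds (x := (1 : ℝ))).sub tendsto_id_one
    simpa using this
  refine limit_good (m := m) (n := n) (T := m - n) (K := K) hn (by omega) (by omega)
    (c := fun s => 1 - s) (c0 := 0) hlim ?_ ?_ (rootU m) ?_ ?_ ?_ (fun _ => X - C 1) ?_ ?_ ?_ ?_ ?_ ?_
    (fun j : ℕ => sinW (π / m) K j) ?_ ?_
  · filter_upwards [ev_Ioo] with s hs; linarith [hs.2]
  · filter_upwards [ev_Ioo] with s hs; linarith [hs.1]
  · intro k hk
    rw [hpoly_aeval, rootU_pow (by omega)]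
    simp
  · exact fun k hk => rootU_im_ne (by omega) hk
  · exact fun k hk j hj => rootU_re_ne (by omega) hk hj
  · exact fun _ => monic_X_sub_C 1
  · intro _; rw [natDegree_X_sub_C]; omega
  · simp
  · intro s w hw
    simp only [map_sub, aeval_X, aeval_C, map_one] at hw
    rw [sub_eq_zero.1 hw]; simp
  · apply Filter.Eventually.of_forall
    intro s
    rw [dvd_iff_isRoot]
    simp [hpoly]
  · exact tendsto_const_nhds
  · intro j hj
    exact sinW_pos (by omega)
  · rw [← sinW_inv_rootU (M := m) (K := K) (by omega)]
    congr 1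
    rw [Polynomial.coe_sub, Polynomial.coe_X, Polynomial.coe_C, map_one]
    ring

lemma exists_even {m n M : ℕ} (hn : 3 ≤ n) (hnm : n ≤ M) (hM : M ≤ m) (hMm : m ≤ M + 1)
    (heven : Even n) (hMe : Even M) {c : ℝ → ℝ} {c0 : ℝ} (hc : Tendsto c (𝓝[<] 1) (𝓝 c0))
    (hc0 : ∀ᶠ s in 𝓝[<] (1 : ℝ), 0 < c s) (hc1 : ∀ᶠ s in 𝓝[<] (1 : ℝ), c s < 1)
    (hω : ∀ z : ℂ, z ^ M = 1 → z ^ m - c0 * z - (1 - c0) = 0)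
    (hroot : ∀ᶠ s in 𝓝[<] (1 : ℝ), (-s) ^ m + c s * s - (1 - c s) = 0) :
    ∃ (K : Set (Fin n → ℝ)) (A : Matrix (Fin n) (Fin n) ℝ), MemP m K ∧ KPrimitive K A ∧
      (n - 2) * (m - 1) + (M - n) + n ≤ expnt K A := by
  obtain ⟨K', hK⟩ := heven
  obtain ⟨M', hM'⟩ := hMe
  obtain ⟨K, rfl⟩ : ∃ K, K' = K + 1 := ⟨K' - 1, by omega⟩
  refine limit_good (m := m) (n := n) (T := M - n) (K := K) hn (by omega) (by omega)
    hc hc0 hc1 (rootU M) ?_ ?_ ?_ (fun s => (X - C 1) * (X + C s)) ?_ ?_ ?_ ?_ ?_ ?_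
    (altS (fun j : ℕ => sinW (π / M) K j)) ?_ ?_
  · intro k hk
    rw [hpoly_aeval]
    exact hω _ (rootU_pow (by omega) k)
  · exact fun k hk => rootU_im_ne (by omega) hk
  · exact fun k hk j hj => rootU_re_ne (by omega) hk hj
  · exact fun s => (monic_X_sub_C 1).mul (monic_X_add_C s)
  · intro s
    rw [(monic_X_sub_C 1).natDegree_mul (monic_X_add_C s), natDegree_X_sub_C, natDegree_X_add_C]
    omega
  · simp
  · intro s w hw
    simp only [map_mul, map_add, map_sub, aeval_X, aeval_C, map_one, mul_eq_zero] at hw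
    rcases hw with hw | hw
    · rw [sub_eq_zero.1 hw]; simp
    · rw [eq_neg_of_add_eq_zero_left hw]; simp
  · filter_upwards [ev_Ioo, hroot] with s hs hr
    apply IsCoprime.mul_dvd
    · rw [← sub_neg_eq_add X, ← map_neg C]
      apply isCoprime_X_sub_C_of_isUnit_sub
      rw [isUnit_iff_ne_zero]
      linarith [hs.1]
    · rw [dvd_iff_isRoot]
      simp [hpoly]
    · rw [← sub_neg_eq_add X, ← map_neg C, dvd_iff_isRoot]
      simp only [hpoly, IsRoot, eval_sub, eval_pow, eval_X, eval_mul, eval_C]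
      linarith
  · rw [PowerSeries.WithPiTopology.tendsto_iff_coeff_tendsto]
    intro d
    simp only [Polynomial.coeff_coe, mul_add, coeff_add, coeff_mul_C]
    exact tendsto_const_nhds.add (tendsto_id_one.const_mul _)
  · intro j hj
    exact altS_sinW_pos (d := M' - K - 1) (by omega) (by omega) (by omega)
  · rw [← sinW_inv_rootU (M := M) (K := K) (by omega), ← altS_mul (fun j : ℕ => sinW (π / M) K j)]
    rw [Polynomial.coe_mul, Polynomial.coe_add, Polynomial.coe_sub, Polynomial.coe_X,
      Polynomial.coe_C, map_one]
    ring

lemma exists_even_even {m n : ℕ} (hn : 3 ≤ n) (hnm : n ≤ m) (hne : Even n) (hme : Even m) :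
    ∃ (K : Set (Fin n → ℝ)) (A : Matrix (Fin n) (Fin n) ℝ), MemP m K ∧ KPrimitive K A ∧
      (n - 2) * (m - 1) + (m - n) + n ≤ expnt K A := by
  refine exists_even (M := m) hn hnm le_rfl (by omega) hne hme
    (c := fun s => (1 - s ^ m) / (1 + s)) (c0 := 0) ?_ ?_ ?_ ?_ ?_
  · have h := ((tendsto_const_nhds (x := (1 : ℝ))).sub (tendsto_id_one.pow m)).div
      ((tendsto_const_nhds (x := (1 : ℝ))).add tendsto_id_one) (by norm_num)
    have e : ((fun x : ℝ => 1 - x ^ m) / fun x => 1 + x) = fun s => (1 - s ^ m) / (1 + s) := rfl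
    rw [← e]
    simpa using h
  · filter_upwards [ev_Ioo] with s hs
    have : s ^ m < 1 := pow_lt_one₀ hs.1.le hs.2 (by omega)
    exact div_pos (by linarith) (by linarith [hs.1])
  · filter_upwards [ev_Ioo] with s hs
    have : 0 < s ^ m := pow_pos hs.1 m
    rw [div_lt_one (by linarith [hs.1])]
    linarith [hs.1]
  · intro z hz; rw [hz]; simp
  · filter_upwards [ev_Ioo] with s hs
    have : 1 + s ≠ 0 := by linarith [hs.1]
    rw [hme.neg_pow]
    field_simp
    ring

lemma exists_even_odd {m n : ℕ} (hn : 3 ≤ n) (hnm : n ≤ m) (hne : Even n) (hmo : Odd m) :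
    ∃ (K : Set (Fin n → ℝ)) (A : Matrix (Fin n) (Fin n) ℝ), MemP m K ∧ KPrimitive K A ∧
      (n - 2) * (m - 1) + (m - 1 - n) + n ≤ expnt K A := by
  have hme : Even (m - 1) := by
    obtain ⟨k, hk⟩ := hmo
    exact ⟨k, by omega⟩
  have hnm' : n ≤ m - 1 := by
    obtain ⟨k, hk⟩ := hmo
    obtain ⟨j, hj⟩ := hne
    omega
  refine exists_even (M := m - 1) hn hnm' (by omega) (by omega) hne hme
    (c := fun s => (1 + s ^ m) / (1 + s)) (c0 := 1) ?_ ?_ ?_ ?_ ?_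
  · have h := ((tendsto_const_nhds (x := (1 : ℝ))).add (tendsto_id_one.pow m)).div
      ((tendsto_const_nhds (x := (1 : ℝ))).add tendsto_id_one) (by norm_num)
    have e : ((fun x : ℝ => 1 + x ^ m) / fun x => 1 + x) = fun s => (1 + s ^ m) / (1 + s) := rfl
    rw [← e]
    simpa using h
  · filter_upwards [ev_Ioo] with s hs
    have : 0 < s ^ m := pow_pos hs.1 m
    exact div_pos (by linarith) (by linarith [hs.1])
  · filter_upwards [ev_Ioo] with s hs
    have : s ^ m < s := by
      have := pow_lt_pow_right_of_lt_one₀ hs.1 hs.2 (show 1 < m by omega)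
      simpa using this
    rw [div_lt_one (by linarith [hs.1])]
    linarith
  · intro z hz
    obtain ⟨k, rfl⟩ : ∃ k, m = k + 1 := ⟨m - 1, by omega⟩
    rw [Nat.add_sub_cancel] at hz
    rw [pow_succ, hz]; simp
  · filter_upwards [ev_Ioo] with s hs
    have : 1 + s ≠ 0 := by linarith [hs.1]
    rw [hmo.neg_pow]
    field_simp
    ring

end Final

/-- For `3 ≤ n ≤ m`: (a) `γ(A) ≤ (n-1)(m-1)+1` for every `K ∈ P(m,n)` and `K`-primitive `A`;
(b) if `m` is even, or `m` and `n` are both odd, the bound `(n-1)(m-1)+1` is attained;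
(c) if `m` is odd and `n` is even, the value `(n-1)(m-1)` is attained (so the maximum of
`γ(K)` over `P(m,n)` is at least `(n-1)(m-1)` and at most `(n-1)(m-1)+1`). -/
theorem stmt_17 (m n : ℕ) (hn : 3 ≤ n) (hnm : n ≤ m) :
    (∀ (K : Set (Fin n → ℝ)) (A : Matrix (Fin n) (Fin n) ℝ),
      MemP m K → KPrimitive K A → expnt K A ≤ (n - 1) * (m - 1) + 1) ∧
    ((Even m ∨ (Odd m ∧ Odd n)) →
      ∃ (K : Set (Fin n → ℝ)) (A : Matrix (Fin n) (Fin n) ℝ),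
        MemP m K ∧ KPrimitive K A ∧ expnt K A = (n - 1) * (m - 1) + 1) ∧
    ((Odd m ∧ Even n) →
      ∃ (K : Set (Fin n → ℝ)) (A : Matrix (Fin n) (Fin n) ℝ),
        MemP m K ∧ KPrimitive K A ∧ (n - 1) * (m - 1) ≤ expnt K A) := by
  have part_a : ∀ (K : Set (Fin n → ℝ)) (A : Matrix (Fin n) (Fin n) ℝ),
      MemP m K → KPrimitive K A → expnt K A ≤ (n - 1) * (m - 1) + 1 := by
    rintro K A ⟨hK, hm⟩ hA
    have := upper_bound (by omega : 2 ≤ n) hK hA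
    rwa [hm] at this
  have arith : (n - 2) * (m - 1) + (m - 1) = (n - 1) * (m - 1) := by
    obtain ⟨k, rfl⟩ : ∃ k, n = k + 2 := ⟨n - 2, by omega⟩
    rw [show k + 2 - 1 = k + 1 by omega, Nat.add_sub_cancel]
    ring
  refine ⟨part_a, ?_, ?_⟩
  · intro h
    have hex : ∃ (K : Set (Fin n → ℝ)) (A : Matrix (Fin n) (Fin n) ℝ), MemP m K ∧ KPrimitive K A ∧
        (n - 2) * (m - 1) + (m - n) + n ≤ expnt K A := by
      rcases Nat.even_or_odd n with hne | hno
      · rcases h with hm | ⟨_, hno⟩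
        · exact exists_even_even hn hnm hne hm
        · exact absurd hne (Nat.not_even_iff_odd.2 hno)
      · exact exists_odd hn hnm hno
    obtain ⟨K, A, h1, h2, h3⟩ := hex
    refine ⟨K, A, h1, h2, le_antisymm (part_a K A h1 h2) ?_⟩
    omega
  · rintro ⟨hm, hne⟩
    obtain ⟨K, A, h1, h2, h3⟩ := exists_even_odd hn hnm hne hm
    refine ⟨K, A, h1, h2, ?_⟩
    omega
end
end
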